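/- Let R be a standard graded domain of dimension d ≥ 2 over an algebraically closed field k of characteristic 0, let I ⊂ R be a homogeneous ideal of finite colength, and let (A, R_A, I_A) be a spread of (R, I) with generic point s_0 of Spec(A). Then for any fixed m ≥ d−1, lim_{s → s_0} [ ℓ(R_s/I_s^{[p^m]}) / p^{md} − e_{HK}(R_s, I_s) ] = 0, where p = char k(s) and the limit is over closed points s of a suitable open dense subset of Spec(A). -/

import Mathlib

/-!
Statement 2 (Theorem 1.1(3)): let `R` be a standard graded domain of dimension
`d ≥ 2` over an algebraically closed field `k` of characteristic `0`, `I ⊂ R` a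
homogeneous ideal of finite colength, and `(A, R_A, I_A)` a spread of `(R, I)`
with generic point `s₀` of `Spec A`.  Then for any fixed `m ≥ d − 1`,
`lim_{s→s₀} [ℓ(R_s/I_s^{[pᵐ]})/p^{md} − e_HK(R_s, I_s)] = 0`, where
`p = char k(s)` and the limit is over closed points `s` of a suitable dense
open subset of `Spec A`: for every `ε > 0` there is a nonzero `g ∈ A` such
that the quantity has absolute value `< ε` at every closed point of the basic
open set `D(g)`.
-/

open Filter

/-- The Frobenius power `I^{[q]}`: the ideal generated by `q`-th powers of
elements of `I`. -/
def Ideal.frobeniusPower {R : Type*} [CommRing R] (I : Ideal R) (q : ℕ) : Ideal R :=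
  Ideal.span ((fun x => x ^ q) '' (I : Set R))

/-- The colength `ℓ(R_s / I_s^{[q]})` of the `q`-th Frobenius power of the
fiber ideal `I_s` in the fiber `R_s = S ⊗_A \bar{k(s)}` over the closed point
`𝔪` of `Spec A`, measured as a `\bar{k(s)}`-vector space dimension. -/
noncomputable def spreadFiberColength {A R : Type*} [CommRing A] [CommRing R]
    [Algebra A R] (S : Subalgebra A R) (I_A : Ideal S)
    (𝔪 : Ideal A) (h𝔪 : 𝔪.IsMaximal) (q : ℕ) : ℕ :=
  letI := h𝔪
  letI : Field (A ⧸ 𝔪) := Ideal.Quotient.field 𝔪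
  Module.finrank (AlgebraicClosure (A ⧸ 𝔪))
    ((TensorProduct A (AlgebraicClosure (A ⧸ 𝔪)) S) ⧸
      ((I_A.map (Algebra.TensorProduct.includeRight.toRingHom :
          S →+* TensorProduct A (AlgebraicClosure (A ⧸ 𝔪)) S)).frobeniusPower q))

/-!
The normalized colengths `ℓ(R_s/I_s^{[p^m]})/p^{md}` approximate their limit with an error at most
`C/p`, where `C` does not depend on the closed point `s` of a dense open subset of `Spec A`. As `p`
exceeds any given bound outside a proper closed subset, this gives the theorem.

*A single fiber.* Let `κ` be a perfect field of characteristic `p`, and let `R` be finite over a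
polynomial ring `P = κ[X₁, …, Xₙ]`, free after inverting `c ∈ P`, with trace form of discriminant
`D ≠ 0`. For `Q = p^e` consider the map `(m_α) ↦ ∑ m_α^Q x^α` from `R^{Q^n}` to `R`, where `α` runs
through the exponent vectors with entries `< Q`. The trace is compatible with Frobenius, so the
discriminant controls the determinant of the matrix expressing the `Q`-th powers of a basis in that
basis. Consequently the kernel of the map is killed by `c`, and its image contains `E^Q R` for an
element `E` of `P` that depends on `c` and `D` but not on `Q`. Reducing modulo `J^{[Q]}` with
`J = I^{[q]}` compares `ℓ(R/I^{[qQ]})` with `Q^n ℓ(R/I^{[q]})`, up to a multiple of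
`Q^n ℓ(R/(I^{[q]} + cE))`.

If every `x_i` is a root modulo `I` of a polynomial of degree at most `δ`, then counting monomials
bounds `ℓ(R/(I^{[q]} + cE))` by a constant times `q^{n-1}`, where the constant involves only `δ`,
the degree of `cE` and the number of generators of `R` over `P`. So `ℓ(R/I^{[q]})/q^n` is a Cauchy
sequence with uniform rate `C/q`. As `cE ∉ I^j` for some `j`, the colengths grow exactly like `q^n`,
so a normalization by `q^d` with `d ≠ n` either tends to zero at the required rate or diverges.

*Spreading out.* Noether normalization of the generic fiber of `R_A`, together with a basis of the
extension of fraction fields, which is separable in characteristic zero, provides such data over a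
localization of `A`, and they are stable under base change to almost all fibers. That `cE ∉ I^j` for
a fixed `j` spreads out as well, by Krull's intersection theorem and generic freeness. If some
element of `R_A` were transcendental modulo `I_A`, then almost all fibers of `R_A/I_A` would be
infinite-dimensional and every colength would vanish by convention.
-/

namespace HilbertKunz

universe u v w

open Module

/-! ### Frobenius powers -/

section FrobeniusPower

variable {R : Type*} [CommRing R]

lemma frobeniusPower_eq_map (p e : ℕ) [ExpChar R p] (J : Ideal R) :
    J.frobeniusPower (p ^ e) = J.map (iterateFrobenius R p e) := rfl

lemma frobeniusPower_frobeniusPower (p e f : ℕ) [ExpChar R p] (J : Ideal R) :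
    (J.frobeniusPower (p ^ e)).frobeniusPower (p ^ f) = J.frobeniusPower (p ^ (f + e)) := by
  simp only [frobeniusPower_eq_map, Ideal.map_map]
  congr 1
  ext x
  simp [iterateFrobenius_def, ← pow_mul, pow_add, mul_comm]

lemma pow_mem_frobeniusPower {J : Ideal R} {x : R} (hx : x ∈ J) (q : ℕ) :
    x ^ q ∈ J.frobeniusPower q :=
  Ideal.subset_span ⟨x, hx, rfl⟩

lemma frobeniusPower_le_pow (J : Ideal R) (q : ℕ) : J.frobeniusPower q ≤ J ^ q := by
  refine Ideal.span_le.2 ?_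
  rintro _ ⟨x, hx, rfl⟩
  exact Ideal.pow_mem_pow hx q

lemma frobeniusPower_le_self (J : Ideal R) {q : ℕ} (hq : q ≠ 0) : J.frobeniusPower q ≤ J :=
  (frobeniusPower_le_pow J q).trans (Ideal.pow_le_self hq)

lemma map_frobeniusPower_of_surjective {R' : Type*} [CommRing R'] {f : R →+* R'}
    (hf : Function.Surjective f) (J : Ideal R) (q : ℕ) :
    (J.frobeniusPower q).map f = (J.map f).frobeniusPower q := by
  have h_image : ((J.map f : Ideal R') : Set R') = f '' J :=
    Set.ext fun y => Ideal.mem_map_iff_of_surjective f hf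
  simp only [Ideal.frobeniusPower, Ideal.map_span, h_image, Set.image_image, map_pow]

/-- The colength `ℓ(R/I^{[q]})` of a Frobenius power, as a `κ`-dimension (`0` if infinite). -/
noncomputable def frobeniusColength (κ : Type*) [Field κ] [Algebra κ R] (I : Ideal R) (q : ℕ) : ℕ :=
  finrank κ (R ⧸ I.frobeniusPower q)

lemma frobeniusColength_frobeniusPower (κ : Type*) [Field κ] [Algebra κ R] (p e f : ℕ)
    [ExpChar R p] (I : Ideal R) :
    frobeniusColength κ (I.frobeniusPower (p ^ e)) (p ^ f) =
      frobeniusColength κ I (p ^ (f + e)) := by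
  rw [frobeniusColength, frobeniusPower_frobeniusPower, frobeniusColength]

end FrobeniusPower

/-! ### Dimension counts -/

section DimensionCount

variable {κ V W ι : Type*} [Field κ] [AddCommGroup V] [Module κ V] [AddCommGroup W] [Module κ W]

theorem finrank_range_add_finrank_ker_semilinear {σ : κ →+* κ} [RingHomSurjective σ]
    [Module.Finite κ V] (f : V →ₛₗ[σ] W) :
    finrank κ (LinearMap.range f) + finrank κ (LinearMap.ker f) = finrank κ V := by
  have hσ : Function.Bijective σ := ⟨σ.injective, RingHomSurjective.is_surjective⟩
  let g : V ⧸ LinearMap.ker f →ₛₗ[σ] LinearMap.range f :=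
    (LinearMap.ker f).liftQ f.rangeRestrict (LinearMap.ker_rangeRestrict f).ge
  have hg : Function.Bijective g := by
    refine ⟨LinearMap.ker_eq_bot.1 ?_, fun ⟨_, v, hv⟩ => ⟨Submodule.Quotient.mk v, ?_⟩⟩
    · exact Submodule.ker_liftQ_eq_bot' _ _ (LinearMap.ker_rangeRestrict f).symm
    · exact Subtype.ext hv
  have h_lift := lift_rank_eq_of_equiv_equiv σ
    (AddEquiv.ofBijective g.toAddMonoidHom hg) hσ (map_smulₛₗ g)
  have h_toNat := congrArg Cardinal.toNat h_lift
  rw [Cardinal.toNat_lift, Cardinal.toNat_lift] at h_toNat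
  rw [← Submodule.finrank_quotient_add_finrank (LinearMap.ker f)]
  exact congrArg (· + _) h_toNat.symm

lemma finrank_submodule_pi_le [Fintype ι] [Module.Finite κ V] (K : Submodule κ (ι → V))
    (N : Submodule κ V) (hK : ∀ v ∈ K, ∀ i, v i ∈ N) :
    finrank κ K ≤ Fintype.card ι * finrank κ N := by
  let f : K →ₗ[κ] ι → N := LinearMap.pi fun i =>
    (LinearMap.proj i ∘ₗ K.subtype).codRestrict N fun v => hK v v.2 i
  have hf : Function.Injective f := fun v w hvw =>
    Subtype.ext <| funext fun i => congrArg Subtype.val (congrFun hvw i)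
  simpa [finrank_pi_fintype] using LinearMap.finrank_le_finrank_of_injective hf

lemma finrank_le_finrank_ker_of_comp_eq_zero {σ : κ →+* κ} [RingHomSurjective σ]
    [Module.Finite κ V] {g : V →ₛₗ[σ] W} (hg : Function.Surjective g) {t : V →ₗ[κ] V}
    (hgt : ∀ v, g (t v) = 0) : finrank κ W ≤ finrank κ (LinearMap.ker t) := by
  have h_range_le : finrank κ (LinearMap.range t) ≤ finrank κ (LinearMap.ker g) := by
    refine Submodule.finrank_mono ?_
    rintro _ ⟨v, rfl⟩
    exact hgt v
  have h_g := finrank_range_add_finrank_ker_semilinear g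
  rw [LinearMap.range_eq_top.2 hg, finrank_top] at h_g
  have h_t := LinearMap.finrank_range_add_finrank_ker t
  omega

lemma finrank_ker_mulLeft_mk {R : Type*} [CommRing R] [Algebra κ R] (J : Ideal R)
    [Module.Finite κ (R ⧸ J)] (x : R) :
    finrank κ (LinearMap.ker (LinearMap.mulLeft κ (Ideal.Quotient.mk J x))) =
      finrank κ (R ⧸ (J ⊔ Ideal.span {x})) := by
  have h_range : LinearMap.range (LinearMap.mulLeft κ (Ideal.Quotient.mk J x)) =
      ((Ideal.span {x}).map (Ideal.Quotient.mkₐ κ J)).restrictScalars κ := by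
    ext v
    simp [Ideal.map_span, Ideal.mem_span_singleton, dvd_def, eq_comm]
  have h_quot := (DoubleQuot.quotQuotEquivQuotSupₐ κ J (Ideal.span {x})).toLinearEquiv.finrank_eq
  have h_mul := LinearMap.finrank_range_add_finrank_ker
    (LinearMap.mulLeft κ (Ideal.Quotient.mk J x))
  have h_coker := Submodule.finrank_quotient_add_finrank
    (LinearMap.range (LinearMap.mulLeft κ (Ideal.Quotient.mk J x)))
  rw [h_range] at h_mul h_coker
  have h_restrict : finrank κ ((R ⧸ J) ⧸
      ((Ideal.span {x}).map (Ideal.Quotient.mkₐ κ J)).restrictScalars κ) =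
      finrank κ ((R ⧸ J) ⧸ (Ideal.span {x}).map (Ideal.Quotient.mkₐ κ J)) := rfl
  omega

end DimensionCount

/-! ### Comparing colengths of Frobenius powers -/

/-- The map `(mᵢ) ↦ ∑ mᵢ^q Xᵢ` behaves, up to the multipliers `c` and `E`, as if the `Xᵢ` were a
basis of `R` over its `q`-th powers: `c` kills its kernel, and its image contains `E^q R`. -/
structure IsAlmostFrobeniusBasis {R ι : Type*} [CommRing R] [Fintype ι] (q : ℕ) (X : ι → R)
    (c E : R) : Prop where
  mul_eq_zero : ∀ m : ι → R, ∑ i, m i ^ q * X i = 0 → ∀ i, c * m i = 0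
  exists_sum_eq : ∀ x : R, ∃ m : ι → R, ∑ i, m i ^ q * X i = E ^ q * x

section FrobeniusSum

variable {κ R ι : Type*} [Field κ] [CommRing R] [Algebra κ R] [Fintype ι]
  (p e : ℕ) [ExpChar κ p] [ExpChar R p] (J : Ideal R) (X : ι → R)

/-- The map `R/J → R/J^{[p^e]}` induced by the iterated Frobenius. -/
noncomputable def frobeniusQuotient : R ⧸ J →+* R ⧸ J.frobeniusPower (p ^ e) :=
  Ideal.quotientMap _ (iterateFrobenius R p e)
    (Ideal.map_le_iff_le_comap.1 (frobeniusPower_eq_map p e J).ge)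

lemma frobeniusQuotient_mk (x : R) :
    frobeniusQuotient p e J (Ideal.Quotient.mk J x) = Ideal.Quotient.mk _ (x ^ p ^ e) := by
  simp [frobeniusQuotient, iterateFrobenius_def]

lemma frobeniusQuotient_smul (t : κ) (v : R ⧸ J) :
    frobeniusQuotient p e J (t • v) = iterateFrobenius κ p e t • frobeniusQuotient p e J v := by
  rw [Algebra.smul_def, map_mul, Algebra.smul_def]
  congr 1
  rw [← Ideal.Quotient.mk_algebraMap, frobeniusQuotient_mk, iterateFrobenius_def, map_pow,
    map_pow, ← Ideal.Quotient.mk_algebraMap]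

/-- The Frobenius-semilinear map `(vᵢ) ↦ ∑ vᵢ^{p^e} Xᵢ` from a power of `R/J` to `R/J^{[p^e]}`. -/
noncomputable def frobeniusSum :
    (ι → R ⧸ J) →ₛₗ[iterateFrobenius κ p e] R ⧸ J.frobeniusPower (p ^ e) where
  toFun v := ∑ i, frobeniusQuotient p e J (v i) * Ideal.Quotient.mk _ (X i)
  map_add' v w := by simp [add_mul, Finset.sum_add_distrib]
  map_smul' t v := by simp [frobeniusQuotient_smul, Finset.smul_sum]

lemma frobeniusSum_mk (m : ι → R) :
    frobeniusSum (κ := κ) p e J X (fun i => Ideal.Quotient.mk J (m i)) =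
      Ideal.Quotient.mk _ (∑ i, m i ^ p ^ e * X i) := by
  simp [frobeniusSum, frobeniusQuotient_mk]

variable {p e J X} {c E : R}

lemma IsAlmostFrobeniusBasis.exists_sum_eq_of_mem (hX : IsAlmostFrobeniusBasis (p ^ e) X c E)
    {z : R} (hz : z ∈ J.frobeniusPower (p ^ e)) :
    ∃ m : ι → R, (∀ i, m i ∈ J) ∧ ∑ i, m i ^ p ^ e * X i = E ^ p ^ e * z := by
  -- The coefficient `b` makes the statement stable under `R`-multiples of `z`.
  suffices ∀ b : R, ∃ m : ι → R, (∀ i, m i ∈ J) ∧ ∑ i, m i ^ p ^ e * X i = E ^ p ^ e * (b * z) by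
    simpa using this 1
  induction hz using Submodule.span_induction with
  | mem z hz =>
    intro b
    obtain ⟨y, hy, rfl⟩ := hz
    obtain ⟨m, hm⟩ := hX.exists_sum_eq b
    refine ⟨fun i => y * m i, fun i => J.mul_mem_right _ hy, ?_⟩
    simp only [mul_pow, mul_assoc, ← Finset.mul_sum, hm]
    ring
  | zero => exact fun b => ⟨0, fun _ => J.zero_mem, by simp [(expChar_pos R p).ne']⟩
  | add x y _ _ hx hy =>
    intro b
    obtain ⟨m₁, h_mem₁, h_sum₁⟩ := hx b
    obtain ⟨m₂, h_mem₂, h_sum₂⟩ := hy b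
    refine ⟨m₁ + m₂, fun i => J.add_mem (h_mem₁ i) (h_mem₂ i), ?_⟩
    simp only [Pi.add_apply, add_pow_expChar_pow, add_mul, Finset.sum_add_distrib, h_sum₁, h_sum₂]
    ring
  | smul a x _ hx =>
    intro b
    obtain ⟨m, h_mem, h_sum⟩ := hx (b * a)
    exact ⟨m, h_mem, by rw [h_sum, smul_eq_mul]; ring⟩

lemma IsAlmostFrobeniusBasis.mul_mem_of_sum_mem (hX : IsAlmostFrobeniusBasis (p ^ e) X c E)
    {m : ι → R} (hm : ∑ i, m i ^ p ^ e * X i ∈ J.frobeniusPower (p ^ e)) (i : ι) :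
    c * E * m i ∈ J := by
  obtain ⟨m', h_mem, h_sum⟩ := hX.exists_sum_eq_of_mem hm
  have h_diff : ∑ i, (E * m i - m' i) ^ p ^ e * X i = 0 := by
    simp only [sub_pow_expChar_pow, sub_mul, Finset.sum_sub_distrib, h_sum, mul_pow, mul_assoc,
      ← Finset.mul_sum, sub_self]
  have h_mul : c * E * m i = c * m' i := by linear_combination hX.mul_eq_zero _ h_diff i
  exact h_mul ▸ J.mul_mem_left _ (h_mem i)

lemma finrank_ker_frobeniusSum_le [Module.Finite κ (R ⧸ J)]
    (hX : IsAlmostFrobeniusBasis (p ^ e) X c E) :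
    finrank κ (LinearMap.ker (frobeniusSum (κ := κ) p e J X)) ≤
      Fintype.card ι * finrank κ (R ⧸ (J ⊔ Ideal.span {c * E})) := by
  rw [← finrank_ker_mulLeft_mk]
  refine finrank_submodule_pi_le _ _ fun v hv i => ?_
  choose m hm using fun i => Ideal.Quotient.mk_surjective (v i)
  obtain rfl : (fun i => Ideal.Quotient.mk J (m i)) = v := funext hm
  rw [LinearMap.mem_ker, frobeniusSum_mk, Ideal.Quotient.eq_zero_iff_mem] at hv
  rw [LinearMap.mem_ker, LinearMap.mulLeft_apply, ← map_mul, Ideal.Quotient.eq_zero_iff_mem]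
  exact hX.mul_mem_of_sum_mem hv i

lemma frobeniusSum_surjective {υ : Type*} [Fintype υ] {Y : υ → R}
    (hY : ∀ y : R, ∃ b : υ → R, y = ∑ j, b j ^ p ^ e * Y j) :
    Function.Surjective (frobeniusSum (κ := κ) p e J Y) := fun w => by
  obtain ⟨y, rfl⟩ := Ideal.Quotient.mk_surjective w
  obtain ⟨b, hb⟩ := hY y
  exact ⟨fun j => Ideal.Quotient.mk J (b j), by rw [frobeniusSum_mk, ← hb]⟩

variable [PerfectRing κ p]

instance : RingHomSurjective (iterateFrobenius κ p e) :=
  ⟨(bijective_iterateFrobenius κ p e).2⟩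

theorem card_mul_finrank_le_frobeniusColength [Module.Finite κ (R ⧸ J)]
    [Module.Finite κ (R ⧸ J.frobeniusPower (p ^ e))]
    (hX : IsAlmostFrobeniusBasis (p ^ e) X c E) :
    Fintype.card ι * finrank κ (R ⧸ J) ≤
      frobeniusColength κ J (p ^ e) +
        Fintype.card ι * finrank κ (R ⧸ (J ⊔ Ideal.span {c * E})) :=
  calc Fintype.card ι * finrank κ (R ⧸ J) = finrank κ (ι → R ⧸ J) := by simp [finrank_pi_fintype]
    _ = finrank κ (LinearMap.range (frobeniusSum (κ := κ) p e J X)) +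
        finrank κ (LinearMap.ker (frobeniusSum (κ := κ) p e J X)) :=
      (finrank_range_add_finrank_ker_semilinear _).symm
    _ ≤ _ := add_le_add (Submodule.finrank_le _) (finrank_ker_frobeniusSum_le hX)

lemma IsAlmostFrobeniusBasis.frobeniusSum_mul_mem_range
    (hX : IsAlmostFrobeniusBasis (p ^ e) X c E) {υ : Type*} [Fintype υ] (Y : υ → R)
    (v : υ → R ⧸ J) :
    frobeniusSum (κ := κ) p e J Y (fun j => Ideal.Quotient.mk J (c * E) * v j) ∈
      LinearMap.range (frobeniusSum (κ := κ) p e J X) := by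
  choose b hb using fun j => Ideal.Quotient.mk_surjective (v j)
  obtain ⟨m, hm⟩ := hX.exists_sum_eq (c ^ p ^ e * ∑ j, b j ^ p ^ e * Y j)
  refine ⟨fun i => Ideal.Quotient.mk J (m i), ?_⟩
  simp only [← hb, ← map_mul]
  rw [frobeniusSum_mk, frobeniusSum_mk, hm]
  simp only [mul_pow, mul_assoc, ← Finset.mul_sum]
  rw [mul_left_comm]

theorem frobeniusColength_le_card_mul_finrank_add [Module.Finite κ (R ⧸ J)]
    [Module.Finite κ (R ⧸ J.frobeniusPower (p ^ e))]
    (hX : IsAlmostFrobeniusBasis (p ^ e) X c E) {υ : Type*} [Fintype υ] {Y : υ → R}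
    (hY : ∀ y : R, ∃ b : υ → R, y = ∑ j, b j ^ p ^ e * Y j) :
    frobeniusColength κ J (p ^ e) ≤ Fintype.card ι * finrank κ (R ⧸ J) +
      Fintype.card υ * finrank κ (R ⧸ (J ⊔ Ideal.span {c * E})) := by
  let Φ := frobeniusSum (κ := κ) p e J X
  have h_coker : finrank κ ((R ⧸ J.frobeniusPower (p ^ e)) ⧸ LinearMap.range Φ) ≤
      Fintype.card υ * finrank κ (R ⧸ (J ⊔ Ideal.span {c * E})) := by
    have hg := (Submodule.mkQ_surjective (LinearMap.range Φ)).comp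
      (frobeniusSum_surjective (κ := κ) hY)
    rw [← finrank_ker_mulLeft_mk]
    refine (finrank_le_finrank_ker_of_comp_eq_zero
      (g := (LinearMap.range Φ).mkQ.comp (frobeniusSum p e J Y)) hg
      (t := (LinearMap.mulLeft κ (Ideal.Quotient.mk J (c * E))).compLeft υ) fun v => ?_).trans
      (finrank_submodule_pi_le _ _ fun v hv j => congrFun hv j)
    exact (Submodule.Quotient.mk_eq_zero _).2 (hX.frobeniusSum_mul_mem_range Y v)
  have h_range : finrank κ (LinearMap.range Φ) ≤ Fintype.card ι * finrank κ (R ⧸ J) := by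
    have h := finrank_range_add_finrank_ker_semilinear Φ
    rw [finrank_pi_fintype, Finset.sum_const, smul_eq_mul, Finset.card_univ] at h
    omega
  rw [frobeniusColength, ← Submodule.finrank_quotient_add_finrank (LinearMap.range Φ), add_comm]
  exact add_le_add h_range h_coker

theorem card_le_frobeniusColength [Module.Finite κ (R ⧸ J)]
    [Module.Finite κ (R ⧸ J.frobeniusPower (p ^ e))]
    (hX : IsAlmostFrobeniusBasis (p ^ e) X c E) (hcE : c * E ∉ J) :
    Fintype.card ι ≤ frobeniusColength κ J (p ^ e) := by
  have h_lt : finrank κ (R ⧸ (J ⊔ Ideal.span {c * E})) < finrank κ (R ⧸ J) := by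
    rw [← finrank_ker_mulLeft_mk]
    refine Submodule.finrank_lt fun h_top => hcE (Ideal.Quotient.eq_zero_iff_mem.1 ?_)
    simpa using LinearMap.congr_fun (LinearMap.ker_eq_top.1 h_top) 1
  have h_ge := card_mul_finrank_le_frobeniusColength (κ := κ) (J := J) hX
  nlinarith

end FrobeniusSum

/-! ### Traces and Frobenius -/

section MatrixTrace

open Polynomial

variable {ι R : Type*} [Fintype ι] [DecidableEq ι] [CommRing R] (p e : ℕ) [ExpChar R p]

-- `(X - M) ^ q = X ^ q - M ^ q` for `q = p ^ e`.
lemma charpoly_pow_expChar_pow [IsDomain R] (M : Matrix ι ι R) :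
    (M ^ p ^ e).charpoly = M.charpoly.map (iterateFrobenius R p e) := by
  cases isEmpty_or_nonempty ι
  · simp
  have h_expand : expand R (p ^ e) (M ^ p ^ e).charpoly = M.charpoly ^ p ^ e := by
    unfold Matrix.charpoly
    rw [AlgHom.map_det, ← Matrix.coe_detMonoidHom, ← map_pow]
    refine congrArg Matrix.det (matPolyEquiv.injective ?_)
    have : ExpChar (Matrix ι ι R)[X] p :=
      expChar_of_injective_algebraMap (R := R) (FaithfulSMul.algebraMap_injective _ _) p
    rw [map_pow, Matrix.matPolyEquiv_charmatrix, sub_pow_expChar_pow_of_commute, ← C_pow]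
    · exact matPolyEquiv_eq_X_pow_sub_C (p ^ e) M
    · exact (C M).commute_X
  apply expand_injective (Nat.pow_pos (expChar_pos R p))
  rw [h_expand, ← map_expand, map_iterateFrobenius_expand]

lemma trace_pow_expChar_pow [IsDomain R] (M : Matrix ι ι R) :
    (M ^ p ^ e).trace = M.trace ^ p ^ e := by
  cases isEmpty_or_nonempty ι
  · simp [Matrix.trace, (expChar_pos R p).ne']
  rw [Matrix.trace_eq_neg_charpoly_coeff, Matrix.trace_eq_neg_charpoly_coeff,
    charpoly_pow_expChar_pow, coeff_map, ← iterateFrobenius_def, map_neg]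

end MatrixTrace

/-! ### Polynomials over a perfect field as a free module over their `q`-th powers -/

section ReducedMonomials

open MvPolynomial

variable {σ κ : Type*} [Fintype σ] [Field κ] (p f : ℕ) [ExpChar κ p]

/-- The exponent vector of a monomial all of whose exponents are `< q`. -/
noncomputable def reducedExponent {q : ℕ} (α : σ → Fin q) : σ →₀ ℕ :=
  Finsupp.equivFunOnFinite.symm fun i => (α i : ℕ)

lemma reducedExponent_apply {q : ℕ} (α : σ → Fin q) (i : σ) : reducedExponent α i = α i := rfl

lemma eq_of_dvd_smul_add_reducedExponent_sub {q : ℕ} {α β : σ → Fin q} {d : σ →₀ ℕ}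
    (hle : reducedExponent β ≤ q • d + reducedExponent α)
    (hdvd : ∀ i, q ∣ (q • d + reducedExponent α - reducedExponent β) i) : β = α := by
  funext i
  have h_le := hle i
  have h_dvd := hdvd i
  simp only [Finsupp.tsub_apply, Finsupp.add_apply, Finsupp.smul_apply, reducedExponent_apply,
    smul_eq_mul] at h_dvd h_le
  have h_mod : (β i : ℕ) ≡ α i [MOD q] :=
    ((Nat.modEq_iff_dvd' h_le).2 h_dvd).trans (by simp [Nat.ModEq])
  exact Fin.ext (h_mod.eq_of_lt_of_lt (β i).2 (α i).2)

variable [DecidableEq σ]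

lemma exists_eq_sum_pow_mul_monomial [PerfectRing κ p] (a : MvPolynomial σ κ) :
    ∃ b : (σ → Fin (p ^ f)) → MvPolynomial σ κ,
      a = ∑ α, b α ^ p ^ f * monomial (reducedExponent α) 1 := by
  have hq : 0 < p ^ f := Nat.pow_pos (expChar_pos κ p)
  induction a using MvPolynomial.induction_on' with
  | monomial d t =>
    obtain ⟨s, rfl⟩ := (bijective_iterateFrobenius κ p f).2 t
    let remainder : σ → Fin (p ^ f) := fun i => ⟨d i % p ^ f, Nat.mod_lt _ hq⟩
    let quotient : σ →₀ ℕ := Finsupp.equivFunOnFinite.symm fun i => d i / p ^ f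
    refine ⟨Pi.single remainder (monomial quotient s), ?_⟩
    rw [Finset.sum_eq_single remainder]
    · rw [Pi.single_eq_same, monomial_pow, monomial_mul, mul_one, iterateFrobenius_def]
      congr 2
      ext i
      simp [remainder, quotient, reducedExponent_apply, Nat.div_add_mod]
    · intro β _ hβ
      rw [Pi.single_eq_of_ne hβ, zero_pow hq.ne', zero_mul]
    · simp
  | add a b ha hb =>
    obtain ⟨b₁, rfl⟩ := ha
    obtain ⟨b₂, rfl⟩ := hb
    refine ⟨b₁ + b₂, ?_⟩
    simp only [Pi.add_apply, add_pow_expChar_pow, add_mul, Finset.sum_add_distrib]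

lemma eq_zero_of_sum_pow_mul_monomial_eq_zero {b : (σ → Fin (p ^ f)) → MvPolynomial σ κ}
    (hb : ∑ α, b α ^ p ^ f * monomial (reducedExponent α) 1 = 0) : b = 0 := by
  funext α
  ext d
  have h_coeff := congrArg (coeff (p ^ f • d + reducedExponent α)) hb
  rw [coeff_sum, Finset.sum_eq_single α] at h_coeff
  · rw [coeff_mul_monomial, mul_one, ← map_iterateFrobenius_expand, coeff_map,
      coeff_expand_smul _ (Nat.pow_pos (expChar_pos κ p)).ne', coeff_zero, map_eq_zero] at h_coeff
    exact h_coeff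
  · intro β _ hβ
    rw [coeff_mul_monomial']
    split_ifs with hle
    · obtain ⟨i, hi⟩ := not_forall.1 (mt (eq_of_dvd_smul_add_reducedExponent_sub hle) hβ)
      rw [mul_one, ← map_iterateFrobenius_expand, coeff_map, coeff_expand_of_not_dvd _ hi, map_zero]
    · rfl
  · simp

end ReducedMonomials

open MvPolynomial TensorProduct
open scoped nonZeroDivisors Topology

/-! ### Generically free algebras over a polynomial ring -/

/-- An `A`-algebra `S` finite over the polynomial ring `P = A[X₁, …, Xₙ]`, which acts through the
elements `coord`, together with a basis of `S` over `P` after inverting `denom ∈ P`. The coordinate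
map of that basis is recorded without fractions, as its multiple `scaledRepr` by `denom`. -/
structure NormalizationData (A S : Type*) [CommRing A] [CommRing S] [Algebra A S]
    (n s r : ℕ) where
  coord : Fin n → S
  gen : Fin s → S
  exists_eq_sum_gen : ∀ y, ∃ a : Fin s → MvPolynomial (Fin n) A, y = ∑ j, aeval coord (a j) * gen j
  basis : Fin r → S
  denom : MvPolynomial (Fin n) A
  scaledRepr : S →ₗ[A] (Fin r → MvPolynomial (Fin n) A)
  scaledRepr_mul : ∀ (a : MvPolynomial (Fin n) A) (y : S),
    scaledRepr (aeval coord a * y) = a • scaledRepr y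
  scaledRepr_basis : ∀ i, scaledRepr (basis i) = Pi.single i denom
  denom_mul : ∀ y, aeval coord denom * y = ∑ i, aeval coord (scaledRepr y i) * basis i

namespace NormalizationData

section Trace

variable {A S : Type*} [CommRing A] [CommRing S] [Algebra A S] {n s r : ℕ}
  (N : NormalizationData A S n s r)

/-- `denom` times the matrix of multiplication by `y`. -/
noncomputable def mulMatrix (y : S) : Matrix (Fin r) (Fin r) (MvPolynomial (Fin n) A) :=
  Matrix.of fun i j => N.scaledRepr (y * N.basis j) i

/-- `denom` times the trace of multiplication by `y`. -/
noncomputable def trace (y : S) : MvPolynomial (Fin n) A := (N.mulMatrix y).trace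

/-- The matrix of the trace form, scaled by `denom`. -/
noncomputable def traceMatrix : Matrix (Fin r) (Fin r) (MvPolynomial (Fin n) A) :=
  Matrix.of fun i j => N.trace (N.basis i * N.basis j)

/-- The discriminant of the basis, scaled by `denom ^ r`. -/
noncomputable def discr : MvPolynomial (Fin n) A := N.traceMatrix.det

/-- The rows are the coordinates, scaled by `denom`, of the `q`-th powers of the basis elements. -/
noncomputable def powMatrix (q : ℕ) : Matrix (Fin r) (Fin r) (MvPolynomial (Fin n) A) :=
  Matrix.of fun i j => N.scaledRepr (N.basis i ^ q) j

/-- The element `E` whose `q`-th power multiplies `S` into the span of the reduced monomials over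
the `q`-th powers; it does not depend on `q`. -/
noncomputable def multiplier : MvPolynomial (Fin n) A := N.denom ^ (2 * r + 1) * N.discr

/-- The polynomial off whose zero locus the comparison of colengths is exact. -/
noncomputable def exceptional : MvPolynomial (Fin n) A := N.denom * N.multiplier

lemma denom_ne_zero (hN : N.exceptional ≠ 0) : N.denom ≠ 0 := left_ne_zero_of_mul hN

lemma discr_ne_zero (hN : N.exceptional ≠ 0) : N.discr ≠ 0 :=
  right_ne_zero_of_mul (right_ne_zero_of_mul hN)

lemma mulMatrix_mul (y z : S) : N.mulMatrix y * N.mulMatrix z = N.denom • N.mulMatrix (y * z) := by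
  ext1 i j
  have h_repr : N.denom * N.scaledRepr (y * z * N.basis j) i =
      N.scaledRepr (y * (aeval N.coord N.denom * (z * N.basis j))) i := by
    rw [show y * (aeval N.coord N.denom * (z * N.basis j)) =
      aeval N.coord N.denom * (y * z * N.basis j) by ring, N.scaledRepr_mul]
    rfl
  simp only [Matrix.mul_apply, Matrix.smul_apply, smul_eq_mul, mulMatrix, Matrix.of_apply]
  rw [h_repr, N.denom_mul, Finset.mul_sum, map_sum, Finset.sum_apply]
  refine Finset.sum_congr rfl fun k _ => ?_
  rw [mul_left_comm, N.scaledRepr_mul, Pi.smul_apply, smul_eq_mul, mul_comm]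

lemma mulMatrix_pow (y : S) (k : ℕ) :
    N.mulMatrix y ^ (k + 1) = N.denom ^ k • N.mulMatrix (y ^ (k + 1)) := by
  induction k with
  | zero => simp
  | succ k ih =>
    rw [pow_succ, ih, Matrix.smul_mul, mulMatrix_mul, smul_smul, ← pow_succ, ← pow_succ]

lemma trace_mul (a : MvPolynomial (Fin n) A) (y : S) :
    N.trace (aeval N.coord a * y) = a * N.trace y := by
  simp only [trace, mulMatrix, Matrix.trace, Matrix.diag_apply, Matrix.of_apply, mul_assoc,
    N.scaledRepr_mul, Pi.smul_apply, smul_eq_mul, Finset.mul_sum]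

lemma trace_sum {ι : Type*} (t : Finset ι) (y : ι → S) :
    N.trace (∑ i ∈ t, y i) = ∑ i ∈ t, N.trace (y i) := by
  simp only [trace, mulMatrix, Matrix.trace, Matrix.diag_apply, Matrix.of_apply, Finset.sum_mul,
    map_sum, Finset.sum_apply]
  rw [Finset.sum_comm]

lemma denom_mul_basis_pow (q : ℕ) (i : Fin r) :
    aeval N.coord N.denom * N.basis i ^ q = ∑ j, aeval N.coord (N.powMatrix q i j) * N.basis j :=
  N.denom_mul _

lemma denom_sq_mul_trace (q : ℕ) (i k : Fin r) :
    N.denom ^ 2 * N.trace (N.basis i ^ q * N.basis k ^ q) =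
      (N.powMatrix q * N.traceMatrix * (N.powMatrix q).transpose) i k := by
  rw [← N.trace_mul, map_pow, show aeval N.coord N.denom ^ 2 * (N.basis i ^ q * N.basis k ^ q) =
    (aeval N.coord N.denom * N.basis i ^ q) * (aeval N.coord N.denom * N.basis k ^ q) by ring,
    denom_mul_basis_pow, denom_mul_basis_pow, Finset.sum_mul_sum, trace_sum]
  simp only [trace_sum, Matrix.mul_apply, Matrix.transpose_apply, Finset.sum_mul]
  rw [Finset.sum_comm]
  refine Finset.sum_congr rfl fun b _ => Finset.sum_congr rfl fun a _ => ?_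
  rw [show aeval N.coord (N.powMatrix q i a) * N.basis a *
    (aeval N.coord (N.powMatrix q k b) * N.basis b) =
    aeval N.coord (N.powMatrix q i a * N.powMatrix q k b) * (N.basis a * N.basis b) by
      rw [map_mul]; ring, trace_mul]
  simp only [traceMatrix, Matrix.of_apply]
  ring

lemma denom_mul_sum_basis_pow (q : ℕ) (z : Fin r → MvPolynomial (Fin n) A) :
    aeval N.coord N.denom * ∑ i, aeval N.coord (z i) * N.basis i ^ q =
      ∑ j, aeval N.coord (Matrix.vecMul z (N.powMatrix q) j) * N.basis j := by
  simp only [Finset.mul_sum, mul_left_comm (aeval N.coord N.denom), denom_mul_basis_pow,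
    Matrix.vecMul, dotProduct, map_sum, map_mul, Finset.sum_mul, mul_assoc]
  exact Finset.sum_comm

lemma sum_basis_pow_vecMul_adjugate (q : ℕ) (x : S) :
    ∑ i, aeval N.coord (N.denom *
        Matrix.vecMul (N.scaledRepr x) (N.powMatrix q).adjugate i) * N.basis i ^ q =
      aeval N.coord (N.denom * (N.powMatrix q).det) * x := by
  simp only [map_mul, mul_assoc, ← Finset.mul_sum]
  rw [denom_mul_sum_basis_pow, Matrix.vecMul_vecMul, Matrix.adjugate_mul, Matrix.vecMul_smul,
    Matrix.vecMul_one, mul_left_comm, N.denom_mul, Finset.mul_sum]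
  simp only [Pi.smul_apply, smul_eq_mul, map_mul, mul_assoc]

lemma eq_zero_of_sum_basis_eq_zero [IsDomain A] (hc : N.denom ≠ 0)
    {a : Fin r → MvPolynomial (Fin n) A} (ha : ∑ i, aeval N.coord (a i) * N.basis i = 0) :
    a = 0 := by
  have h_repr := congrArg N.scaledRepr ha
  simp only [map_sum, N.scaledRepr_mul, N.scaledRepr_basis, map_zero] at h_repr
  ext1 j
  simpa [Finset.sum_apply, Pi.single_apply, hc] using congrFun h_repr j

/-- The images in `S` of the monomials all of whose exponents are `< q`. -/
noncomputable def reducedMonomial (q : ℕ) (α : Fin n → Fin q) : S :=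
  aeval N.coord (monomial (reducedExponent α) (1 : A))

-- Both sides expand `∑ (b_{α,i})^q X^α e_i^q`.
lemma sum_pow_mul_reducedMonomial (p f : ℕ) [ExpChar S p]
    (b : (Fin n → Fin (p ^ f)) → Fin r → MvPolynomial (Fin n) A) :
    ∑ α, (∑ i, aeval N.coord (b α i) * N.basis i) ^ p ^ f * N.reducedMonomial (p ^ f) α =
      ∑ i, aeval N.coord (∑ α, b α i ^ p ^ f * monomial (reducedExponent α) 1) *
        N.basis i ^ p ^ f := by
  simp only [sum_pow_char_pow, map_sum, Finset.sum_mul]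
  rw [Finset.sum_comm]
  refine Finset.sum_congr rfl fun i _ => Finset.sum_congr rfl fun α _ => ?_
  rw [map_mul, map_pow, mul_pow, reducedMonomial]
  ring

end Trace

section CharP

variable {κ R : Type*} [Field κ] [CommRing R] [Algebra κ R] {n s r : ℕ}
  (N : NormalizationData κ R n s r) (p f : ℕ) [ExpChar κ p]

lemma denom_pow_mul_trace_pow (y : R) :
    N.denom ^ (p ^ f - 1) * N.trace (y ^ p ^ f) = N.trace y ^ p ^ f := by
  have h_pow := N.mulMatrix_pow y (p ^ f - 1)
  rw [Nat.sub_add_cancel (Nat.pow_pos (expChar_pos κ p))] at h_pow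
  simpa only [trace, h_pow, Matrix.trace_smul, smul_eq_mul] using
    trace_pow_expChar_pow p f (N.mulMatrix y)

lemma denom_sq_smul_map_traceMatrix :
    N.denom ^ 2 • (iterateFrobenius (MvPolynomial (Fin n) κ) p f).mapMatrix N.traceMatrix =
      N.denom ^ (p ^ f - 1) •
        (N.powMatrix (p ^ f) * N.traceMatrix * (N.powMatrix (p ^ f)).transpose) := by
  ext1 i k
  rw [Matrix.smul_apply, Matrix.smul_apply, ← N.denom_sq_mul_trace]
  simp only [RingHom.mapMatrix_apply, Matrix.map_apply, traceMatrix, Matrix.of_apply, smul_eq_mul,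
    iterateFrobenius_def]
  rw [← N.denom_pow_mul_trace_pow p f, mul_pow]
  ring

theorem denom_pow_mul_discr_pow (hD : N.discr ≠ 0) :
    N.denom ^ (2 * r) * N.discr ^ (p ^ f - 1) =
      N.denom ^ ((p ^ f - 1) * r) * (N.powMatrix (p ^ f)).det ^ 2 := by
  have h_det := congrArg Matrix.det (N.denom_sq_smul_map_traceMatrix p f)
  rw [Matrix.det_smul, Matrix.det_smul, ← RingHom.map_det, Matrix.det_mul, Matrix.det_mul,
    Matrix.det_transpose, Fintype.card_fin, ← pow_mul, ← pow_mul, iterateFrobenius_def,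
    ← discr] at h_det
  apply mul_right_cancel₀ hD
  rw [mul_assoc, ← pow_succ, Nat.sub_add_cancel (Nat.pow_pos (expChar_pos κ p)), h_det]
  ring

lemma det_powMatrix_ne_zero (hc : N.denom ≠ 0) (hD : N.discr ≠ 0) :
    (N.powMatrix (p ^ f)).det ≠ 0 := fun h => by
  have h_sq := N.denom_pow_mul_discr_pow p f hD
  simp [h, hc, hD] at h_sq

lemma denom_mul_det_dvd_multiplier_pow (hD : N.discr ≠ 0) :
    N.denom * (N.powMatrix (p ^ f)).det ∣ N.multiplier ^ p ^ f := by
  obtain ⟨q, hq⟩ : ∃ q, p ^ f = q + 1 :=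
    ⟨p ^ f - 1, (Nat.sub_add_cancel (Nat.pow_pos (expChar_pos κ p))).symm⟩
  have h_sq := N.denom_pow_mul_discr_pow p f hD
  simp only [hq, Nat.add_sub_cancel] at h_sq ⊢
  refine ⟨N.denom ^ ((2 * r + 1) * q) * N.discr * (N.denom ^ (q * r) * (N.powMatrix (q + 1)).det),
    ?_⟩
  rw [multiplier, mul_pow, ← pow_mul]
  linear_combination (N.denom ^ ((2 * r + 1) * q) * N.discr * N.denom) * h_sq

lemma exists_eq_sum_pow_mul_gen [PerfectRing κ p] (y : R) :
    ∃ b : Fin s × (Fin n → Fin (p ^ f)) → R,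
      y = ∑ j, b j ^ p ^ f * (N.gen j.1 * N.reducedMonomial (p ^ f) j.2) := by
  obtain ⟨a, rfl⟩ := N.exists_eq_sum_gen y
  choose b hb using fun j => exists_eq_sum_pow_mul_monomial p f (a j)
  refine ⟨fun j => aeval N.coord (b j.1 j.2), ?_⟩
  rw [Fintype.sum_prod_type]
  refine Finset.sum_congr rfl fun j _ => ?_
  conv_lhs => rw [hb j]
  simp only [map_sum, map_mul, map_pow, Finset.sum_mul, reducedMonomial]
  exact Finset.sum_congr rfl fun α _ => by ring

lemma eq_zero_of_sum_basis_pow_eq_zero (hc : N.denom ≠ 0) (hD : N.discr ≠ 0)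
    {z : Fin r → MvPolynomial (Fin n) κ}
    (hz : ∑ i, aeval N.coord (z i) * N.basis i ^ p ^ f = 0) : z = 0 := by
  refine Matrix.eq_zero_of_vecMul_eq_zero (N.det_powMatrix_ne_zero p f hc hD)
    (N.eq_zero_of_sum_basis_eq_zero hc ?_)
  rw [← denom_mul_sum_basis_pow, hz, mul_zero]

lemma exists_sum_basis_pow_eq_multiplier_pow_mul (hD : N.discr ≠ 0) (x : R) :
    ∃ z : Fin r → MvPolynomial (Fin n) κ,
      ∑ i, aeval N.coord (z i) * N.basis i ^ p ^ f = aeval N.coord N.multiplier ^ p ^ f * x := by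
  obtain ⟨g, hg⟩ := N.denom_mul_det_dvd_multiplier_pow p f hD
  refine ⟨fun i => g * (N.denom *
    Matrix.vecMul (N.scaledRepr x) (N.powMatrix (p ^ f)).adjugate i), ?_⟩
  rw [← map_pow, hg, mul_comm _ g, map_mul, mul_assoc, ← sum_basis_pow_vecMul_adjugate,
    Finset.mul_sum]
  exact Finset.sum_congr rfl fun i _ => by rw [map_mul, mul_assoc]

theorem isAlmostFrobeniusBasis [ExpChar R p] [PerfectRing κ p] (hc : N.denom ≠ 0)
    (hD : N.discr ≠ 0) :
    IsAlmostFrobeniusBasis (p ^ f) (N.reducedMonomial (p ^ f))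
      (aeval N.coord N.denom) (aeval N.coord N.multiplier) where
  mul_eq_zero m hm α := by
    have h_sum : ∑ α, (∑ i, aeval N.coord (N.scaledRepr (m α) i) * N.basis i) ^ p ^ f *
        N.reducedMonomial (p ^ f) α = 0 := by
      simp only [← N.denom_mul, mul_pow, mul_assoc, ← Finset.mul_sum, hm, mul_zero]
    rw [sum_pow_mul_reducedMonomial] at h_sum
    have h_coeff := N.eq_zero_of_sum_basis_pow_eq_zero p f hc hD h_sum
    rw [N.denom_mul]
    refine Finset.sum_eq_zero fun i _ => ?_
    have h_zero := eq_zero_of_sum_pow_mul_monomial_eq_zero p f (congrFun h_coeff i)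
    rw [show N.scaledRepr (m α) i = 0 from congrFun h_zero α, map_zero, zero_mul]
  exists_sum_eq x := by
    obtain ⟨z, hz⟩ := N.exists_sum_basis_pow_eq_multiplier_pow_mul p f hD x
    choose b hb using fun i => exists_eq_sum_pow_mul_monomial p f (z i)
    refine ⟨fun α => ∑ i, aeval N.coord (b i α) * N.basis i, ?_⟩
    rw [N.sum_pow_mul_reducedMonomial p f fun α i => b i α, ← hz]
    exact Finset.sum_congr rfl fun i _ => by rw [← hb i]

end CharP

end NormalizationData

/-! ### Colength bounds by counting monomials -/

section Box

variable {ι : Type*} [Fintype ι] [DecidableEq ι]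

lemma mul_card_slab (M μ : ℕ) (i : ι) :
    M * (Fintype.piFinset (Function.update (fun _ => Finset.range M) i (Finset.range μ))).card =
      μ * M ^ Fintype.card ι := by
  have h_erase : ∏ j ∈ Finset.univ.erase i,
      (Function.update (fun _ => Finset.range M) i (Finset.range μ) j).card =
        M ^ (Fintype.card ι - 1) := by
    rw [Finset.prod_congr rfl (g := fun _ => M) fun j hj => by
      rw [Function.update_of_ne (Finset.ne_of_mem_erase hj), Finset.card_range],
      Finset.prod_const, Finset.card_erase_of_mem (Finset.mem_univ i), Finset.card_univ]
  rw [Fintype.card_piFinset, ← Finset.mul_prod_erase _ _ (Finset.mem_univ i), h_erase,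
    Function.update_self, Finset.card_range, mul_left_comm, ← pow_succ',
    Nat.sub_add_cancel (Fintype.card_pos_iff.2 ⟨i⟩)]

lemma mul_card_box_filter_exists_lt_le (M : ℕ) (μ : ι → ℕ) :
    M * ((Fintype.piFinset fun _ => Finset.range M).filter fun c => ∃ i, c i < μ i).card ≤
      (∑ i, μ i) * M ^ Fintype.card ι := by
  have h_slabs : ((Fintype.piFinset fun _ => Finset.range M).filter fun c => ∃ i, c i < μ i) ⊆
      Finset.univ.biUnion fun i => Fintype.piFinset
        (Function.update (fun _ => Finset.range M) i (Finset.range (μ i))) := by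
    intro c hc
    obtain ⟨h_box, i, hi⟩ := Finset.mem_filter.1 hc
    refine Finset.mem_biUnion.2 ⟨i, Finset.mem_univ _, Fintype.mem_piFinset.2 fun j => ?_⟩
    obtain rfl | hj := eq_or_ne j i
    · rwa [Function.update_self, Finset.mem_range]
    · rw [Function.update_of_ne hj]
      exact Fintype.mem_piFinset.1 h_box j
  refine (Nat.mul_le_mul_left _ ((Finset.card_le_card h_slabs).trans
    Finset.card_biUnion_le)).trans_eq ?_
  simp only [Finset.mul_sum, Finset.sum_mul, mul_card_slab]

end Box

section Degree

variable {σ κ : Type*} [Field κ]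

lemma restrictScalars_sup_restrictSupport_eq_top (m : MonomialOrder σ)
    (J : Ideal (MvPolynomial σ κ)) {T : Set (σ →₀ ℕ)}
    (hT : ∀ c, (∀ F ∈ J, F ≠ 0 → ¬ m.degree F ≤ c) → c ∈ T) :
    J.restrictScalars κ ⊔ restrictSupport κ T = ⊤ := by
  refine eq_top_iff.2 fun a _ => ?_
  obtain ⟨g, remainder, ha, -, h_remainder⟩ := m.div
    (b := fun F : {F : MvPolynomial σ κ // F ∈ J ∧ F ≠ 0} => (F : MvPolynomial σ κ))
    (fun F => (m.leadingCoeff_ne_zero_iff.2 F.2.2).isUnit) a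
  rw [ha]
  refine Submodule.add_mem_sup ?_ ((mem_restrictSupport_iff κ).2 fun c hc =>
    hT c fun F hF hF0 => h_remainder c hc ⟨F, hF, hF0⟩)
  rw [Finsupp.linearCombination_apply]
  exact J.sum_mem fun F _ => J.mul_mem_left _ F.2.1

lemma exists_degree_toMvPolynomial_eq_single (m : MonomialOrder σ) (i : σ) {h : Polynomial κ}
    (hh : h ≠ 0) :
    ∃ k ≤ h.natDegree, m.degree (h.toMvPolynomial i) =
      Finsupp.single i k := by
  classical
  have h_mem := m.degree_mem_support
    ((map_ne_zero_iff _ (Polynomial.toMvPolynomial_injective i)).2 hh)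
  rw [Polynomial.toMvPolynomial, Polynomial.aeval_eq_sum_range] at h_mem
  obtain ⟨k, hk, h_term⟩ := Finset.mem_biUnion.1 (support_sum h_mem)
  have h_single := support_smul h_term
  rw [support_X_pow, Finset.mem_singleton] at h_single
  refine ⟨k, by simpa [Nat.lt_succ_iff] using hk, ?_⟩
  rwa [Polynomial.toMvPolynomial, Polynomial.aeval_eq_sum_range]

end Degree

/-- The class of `x` modulo `I` is a root of a nonzero polynomial over `κ` of degree at most `d`. -/
def IsAlgebraicMod (κ : Type*) {R : Type*} [CommRing κ] [CommRing R] [Algebra κ R]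
    (I : Ideal R) (d : ℕ) (x : R) : Prop :=
  ∃ h : Polynomial κ, h ≠ 0 ∧ h.natDegree ≤ d ∧ Polynomial.aeval x h ∈ I

namespace NormalizationData

variable {κ R : Type*} [Field κ] [CommRing R] [Algebra κ R] {n s r : ℕ}
  (N : NormalizationData κ R n s r)

/-- The exponents of the standard monomials modulo `B`: those divisible by no leading monomial of a
nonzero polynomial in the coordinates which lies in `B`. -/
def standardExponents (B : Ideal R) : Set (Fin n →₀ ℕ) :=
  {c | ∀ F : MvPolynomial (Fin n) κ, F ≠ 0 → aeval N.coord F ∈ B →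
    ¬ MonomialOrder.lex.degree F ≤ c}

lemma mk_aeval_mul_gen_mem_span (B : Ideal R) {T : Set (Fin n →₀ ℕ)}
    (hT : N.standardExponents B ⊆ T) (a : MvPolynomial (Fin n) κ) (j : Fin s) :
    Ideal.Quotient.mkₐ κ B (aeval N.coord a * N.gen j) ∈
      Submodule.span κ (Set.range fun jc : Fin s × T =>
        Ideal.Quotient.mkₐ κ B (aeval N.coord (monomial jc.2.1 (1 : κ)) * N.gen jc.1)) := by
  let φ : MvPolynomial (Fin n) κ →ₗ[κ] R ⧸ B := (Ideal.Quotient.mkₐ κ B).toLinearMap ∘ₗ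
    LinearMap.mulRight κ (N.gen j) ∘ₗ (aeval N.coord).toLinearMap
  suffices h : (⊤ : Submodule κ _) ≤ (Submodule.span κ _).comap φ from
    h (Submodule.mem_top (x := a))
  rw [← restrictScalars_sup_restrictSupport_eq_top MonomialOrder.lex (B.comap (aeval N.coord))
    fun c hc => hT fun F hF0 hFB => hc F hFB hF0]
  refine sup_le (fun F hF => ?_) ?_
  · have h_zero : φ F = 0 := Ideal.Quotient.eq_zero_iff_mem.2 (B.mul_mem_right _ hF)
    exact Submodule.mem_comap.2 (h_zero ▸ zero_mem _)
  · rw [restrictSupport_eq_span, Submodule.span_le]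
    rintro _ ⟨c, hc, rfl⟩
    exact Submodule.subset_span ⟨(j, ⟨c, hc⟩), rfl⟩

lemma finite_and_finrank_quotient_le (B : Ideal R) (T : Finset (Fin n → ℕ))
    (hT : ∀ c ∈ N.standardExponents B, ⇑c ∈ T) :
    Module.Finite κ (R ⧸ B) ∧ finrank κ (R ⧸ B) ≤ s * T.card := by
  let e : {c : Fin n →₀ ℕ | ⇑c ∈ T} ≃ T := Finsupp.equivFunOnFinite.subtypeEquiv fun c => Iff.rfl
  have : Fintype {c : Fin n →₀ ℕ | ⇑c ∈ T} := Fintype.ofEquiv T e.symm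
  let v := fun jc : Fin s × {c : Fin n →₀ ℕ | ⇑c ∈ T} =>
    Ideal.Quotient.mkₐ κ B (aeval N.coord (monomial jc.2.1 (1 : κ)) * N.gen jc.1)
  have h_span : Submodule.span κ (Set.range v) = ⊤ := by
    refine eq_top_iff.2 fun y _ => ?_
    obtain ⟨y, rfl⟩ := Ideal.Quotient.mkₐ_surjective κ B y
    obtain ⟨a, rfl⟩ := N.exists_eq_sum_gen y
    rw [map_sum]
    exact Submodule.sum_mem _ fun j _ => N.mk_aeval_mul_gen_mem_span B hT (a j) j
  refine ⟨⟨Submodule.fg_def.2 ⟨_, Set.finite_range v, h_span⟩⟩, ?_⟩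
  simpa [Fintype.card_congr e] using finrank_le_of_span_eq_top h_span

variable {I : Ideal R} {d : ℕ}

lemma exists_degree_eq_single_of_isAlgebraicMod {i : Fin n} (hI : IsAlgebraicMod κ I d (N.coord i))
    (q : ℕ) : ∃ F : MvPolynomial (Fin n) κ, F ≠ 0 ∧ aeval N.coord F ∈ I.frobeniusPower q ∧
      ∃ k ≤ d * q, MonomialOrder.lex.degree F = Finsupp.single i k := by
  obtain ⟨h, h0, hd, h_mem⟩ := hI
  obtain ⟨k, hk, h_degree⟩ := exists_degree_toMvPolynomial_eq_single MonomialOrder.lex i h0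
  refine ⟨h.toMvPolynomial i ^ q,
    pow_ne_zero _ ((map_ne_zero_iff _ (Polynomial.toMvPolynomial_injective i)).2 h0), ?_, k * q,
    Nat.mul_le_mul_right _ (hk.trans hd), ?_⟩
  · rw [map_pow, aeval_toMvPolynomial]
    exact pow_mem_frobeniusPower h_mem q
  · rw [MonomialOrder.degree_pow, h_degree, Finsupp.smul_single, smul_eq_mul, mul_comm]

lemma mem_box_of_mem_standardExponents (hI : ∀ i, IsAlgebraicMod κ I d (N.coord i)) {q : ℕ}
    {B : Ideal R} (hB : I.frobeniusPower q ≤ B) {c : Fin n →₀ ℕ} (hc : c ∈ N.standardExponents B) :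
    ⇑c ∈ Fintype.piFinset fun _ : Fin n => Finset.range (d * q) := by
  refine Fintype.mem_piFinset.2 fun i => Finset.mem_range.2 ?_
  obtain ⟨F, hF0, hF, k, hk, h_degree⟩ := N.exists_degree_eq_single_of_isAlgebraicMod (hI i) q
  have h_lt := hc F hF0 (hB hF)
  rw [h_degree, Finsupp.single_le_iff, not_le] at h_lt
  exact h_lt.trans_le hk

lemma finite_and_frobeniusColength_le (hI : ∀ i, IsAlgebraicMod κ I d (N.coord i)) (q : ℕ) :
    Module.Finite κ (R ⧸ I.frobeniusPower q) ∧ frobeniusColength κ I q ≤ s * (d * q) ^ n := by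
  simpa [frobeniusColength] using N.finite_and_finrank_quotient_le (I.frobeniusPower q) _
    fun _ => N.mem_box_of_mem_standardExponents hI le_rfl

lemma mul_finrank_frobeniusPower_sup_span_le (hI : ∀ i, IsAlgebraicMod κ I d (N.coord i)) (q : ℕ)
    {F : MvPolynomial (Fin n) κ} (hF : F ≠ 0) {δ : ℕ} (hδ : F.totalDegree ≤ δ) :
    d * q * finrank κ (R ⧸ (I.frobeniusPower q ⊔ Ideal.span {aeval N.coord F})) ≤
      s * (δ * (d * q) ^ n) := by
  set μ := MonomialOrder.lex.degree F
  have hμ : ∑ i, μ i ≤ δ := by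
    have h_degree := le_totalDegree (MonomialOrder.lex.degree_mem_support hF)
    rw [Finsupp.sum_fintype _ _ fun _ => rfl] at h_degree
    exact h_degree.trans hδ
  have h_count := (N.finite_and_finrank_quotient_le
    (I.frobeniusPower q ⊔ Ideal.span {aeval N.coord F})
    ((Fintype.piFinset fun _ => Finset.range (d * q)).filter fun c => ∃ i, c i < μ i)
    fun c hc => Finset.mem_filter.2 ⟨N.mem_box_of_mem_standardExponents hI le_sup_left hc, by
      by_contra! h_le
      exact hc F hF (Ideal.mem_sup_right (Ideal.mem_span_singleton_self _)) h_le⟩).2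
  calc _ ≤ d * q * (s * _) := Nat.mul_le_mul_left _ h_count
    _ = s * (d * q * _) := mul_left_comm _ _ _
    _ ≤ s * ((∑ i, μ i) * (d * q) ^ Fintype.card (Fin n)) :=
      Nat.mul_le_mul_left _ (by convert mul_card_box_filter_exists_lt_le (d * q) μ)
    _ ≤ s * (δ * (d * q) ^ n) := by rw [Fintype.card_fin]; gcongr

end NormalizationData

/-! ### Uniform convergence of normalized Frobenius colengths -/

section Normalized

variable {b C L : ℝ} {u : ℕ → ℝ} {n d : ℕ}

lemma abs_sub_le_of_tendsto_of_forall_add {a : ℕ → ℝ} {ε : ℝ} {m : ℕ}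
    (h : ∀ e, |a m - a (e + m)| ≤ ε) (hL : Tendsto a atTop (𝓝 L)) : |a m - L| ≤ ε :=
  le_of_tendsto (tendsto_const_nhds.sub (hL.comp (tendsto_add_atTop_nat m))).abs
    (Eventually.of_forall h)

lemma abs_div_pow_sub_le_of_lt (hb : 1 < b) (hu0 : ∀ k, 0 ≤ u k)
    (hu : ∀ k, u k ≤ C * b ^ (k * n)) (hnd : n < d)
    (hL : Tendsto (fun k => u k / b ^ (k * d)) atTop (𝓝 L)) (m : ℕ) :
    |u m / b ^ (m * d) - L| ≤ C / b ^ m := by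
  have : 0 < b := one_pos.trans hb
  have hC : 0 ≤ C := by simpa using (hu0 0).trans (hu 0)
  have h_bound : ∀ k, u k / b ^ (k * d) ≤ C / b ^ k := fun k => by
    rw [div_le_div_iff₀ (by positivity) (by positivity)]
    calc u k * b ^ k ≤ C * b ^ (k * n) * b ^ k := by gcongr; exact hu k
      _ = C * b ^ (k * (n + 1)) := by rw [mul_assoc, ← pow_add, mul_add_one]
      _ ≤ C * b ^ (k * d) := by gcongr; exacts [hb.le, hnd]
  have hL0 : L = 0 := tendsto_nhds_unique hL
    (squeeze_zero (fun k => div_nonneg (hu0 k) (by positivity)) h_bound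
      (tendsto_const_nhds.div_atTop (tendsto_pow_atTop_atTop_of_one_lt hb)))
  rw [hL0, sub_zero, abs_of_nonneg (div_nonneg (hu0 m) (by positivity))]
  exact h_bound m

lemma not_tendsto_div_pow_of_lt (hb : 1 < b) (hdn : d < n) {f : ℕ}
    (hu : ∀ e, b ^ (e * n) ≤ u (e + f)) :
    ¬ Tendsto (fun k => u k / b ^ (k * d)) atTop (𝓝 L) := fun hL => by
  have : 0 < b := one_pos.trans hb
  refine not_tendsto_nhds_of_tendsto_atTop ?_ _
    ((hL.comp (tendsto_add_atTop_nat f)).mul_const (b ^ (f * d)))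
  refine tendsto_atTop_mono (fun e => ?_) (tendsto_pow_atTop_atTop_of_one_lt hb)
  rw [Function.comp_apply, div_mul_eq_mul_div, le_div_iff₀ (by positivity)]
  calc b ^ e * b ^ ((e + f) * d) = b ^ (e * (d + 1)) * b ^ (f * d) := by
        rw [← pow_add, ← pow_add]; ring_nf
    _ ≤ b ^ (e * n) * b ^ (f * d) := by gcongr; exacts [hb.le, hdn]
    _ ≤ u (e + f) * b ^ (f * d) := by gcongr; exact hu e

end Normalized

namespace NormalizationData

variable {κ R : Type*} [Field κ] [CommRing R] [Algebra κ R] {n s r : ℕ}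
  (N : NormalizationData κ R n s r) (p : ℕ)
  {I : Ideal R} {d δ : ℕ}

/-- The error term in the comparison of the colengths of `I ^ [p ^ f]` and `I ^ [p ^ (e + f)]`. -/
noncomputable def exceptionalColength (I : Ideal R) (q : ℕ) : ℕ :=
  finrank κ (R ⧸ (I.frobeniusPower q ⊔ Ideal.span {aeval N.coord N.exceptional}))

lemma pow_mul_exceptionalColength_le (hN : N.exceptional ≠ 0)
    (hI : ∀ i, IsAlgebraicMod κ I d (N.coord i)) (hd : 0 < d) (hδ : N.exceptional.totalDegree ≤ δ)
    (f : ℕ) :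
    p ^ f * N.exceptionalColength I (p ^ f) ≤ s * (δ * d ^ n) * p ^ (f * n) :=
  calc p ^ f * N.exceptionalColength I (p ^ f)
      ≤ d * (p ^ f * N.exceptionalColength I (p ^ f)) := Nat.le_mul_of_pos_left _ hd
    _ ≤ s * (δ * (d * p ^ f) ^ n) := by
      rw [← mul_assoc]
      exact N.mul_finrank_frobeniusPower_sup_span_le hI (p ^ f) hN hδ
    _ = s * (δ * d ^ n) * p ^ (f * n) := by rw [mul_pow, pow_mul]; ring

variable [ExpChar R p]

lemma finite_quotient_frobeniusPower_frobeniusPower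
    (hI : ∀ i, IsAlgebraicMod κ I d (N.coord i)) (e f : ℕ) :
    Module.Finite κ (R ⧸ (I.frobeniusPower (p ^ f)).frobeniusPower (p ^ e)) := by
  rw [frobeniusPower_frobeniusPower]
  exact (N.finite_and_frobeniusColength_le hI _).1

variable [ExpChar κ p] [PerfectRing κ p]

lemma isAlmostFrobeniusBasis_of_exceptional_ne_zero (hN : N.exceptional ≠ 0) (e : ℕ) :
    IsAlmostFrobeniusBasis (p ^ e) (N.reducedMonomial (p ^ e))
      (aeval N.coord N.denom) (aeval N.coord N.multiplier) :=
  N.isAlmostFrobeniusBasis p e (N.denom_ne_zero hN) (N.discr_ne_zero hN)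

lemma pow_mul_frobeniusColength_le (hN : N.exceptional ≠ 0)
    (hI : ∀ i, IsAlgebraicMod κ I d (N.coord i)) (e f : ℕ) :
    p ^ (e * n) * frobeniusColength κ I (p ^ f) ≤
      frobeniusColength κ I (p ^ (e + f)) + p ^ (e * n) * N.exceptionalColength I (p ^ f) := by
  have := (N.finite_and_frobeniusColength_le hI (p ^ f)).1
  have := N.finite_quotient_frobeniusPower_frobeniusPower p hI e f
  have h_le := card_mul_finrank_le_frobeniusColength (κ := κ)
    (N.isAlmostFrobeniusBasis_of_exceptional_ne_zero p hN e) (J := I.frobeniusPower (p ^ f))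
  rw [frobeniusColength_frobeniusPower] at h_le
  rw [frobeniusColength.eq_def κ I (p ^ f), exceptionalColength, exceptional, map_mul, pow_mul]
  simpa only [Fintype.card_fun, Fintype.card_fin] using h_le

lemma frobeniusColength_add_le (hN : N.exceptional ≠ 0)
    (hI : ∀ i, IsAlgebraicMod κ I d (N.coord i)) (e f : ℕ) :
    frobeniusColength κ I (p ^ (e + f)) ≤ p ^ (e * n) * frobeniusColength κ I (p ^ f) +
      s * p ^ (e * n) * N.exceptionalColength I (p ^ f) := by
  have := (N.finite_and_frobeniusColength_le hI (p ^ f)).1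
  have := N.finite_quotient_frobeniusPower_frobeniusPower p hI e f
  have h_le := frobeniusColength_le_card_mul_finrank_add (κ := κ)
    (N.isAlmostFrobeniusBasis_of_exceptional_ne_zero p hN e) (N.exists_eq_sum_pow_mul_gen p e)
    (J := I.frobeniusPower (p ^ f))
  rw [frobeniusColength_frobeniusPower] at h_le
  rw [frobeniusColength.eq_def κ I (p ^ f), exceptionalColength, exceptional, map_mul, pow_mul]
  simpa only [Fintype.card_fun, Fintype.card_prod, Fintype.card_fin] using h_le

lemma pow_le_frobeniusColength (hI : ∀ i, IsAlgebraicMod κ I d (N.coord i)) {f : ℕ}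
    (hf : aeval N.coord N.exceptional ∉ I.frobeniusPower (p ^ f)) (e : ℕ) :
    p ^ (e * n) ≤ frobeniusColength κ I (p ^ (e + f)) := by
  have hN : N.exceptional ≠ 0 := fun h => hf (by rw [h, map_zero]; exact zero_mem _)
  have := (N.finite_and_frobeniusColength_le hI (p ^ f)).1
  have := N.finite_quotient_frobeniusPower_frobeniusPower p hI e f
  rw [exceptional, map_mul] at hf
  rw [← frobeniusColength_frobeniusPower, pow_mul]
  simpa only [Fintype.card_fun, Fintype.card_fin] using card_le_frobeniusColength (κ := κ)
      (N.isAlmostFrobeniusBasis_of_exceptional_ne_zero p hN e) hf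

lemma abs_normalized_frobeniusColength_sub_le (hN : N.exceptional ≠ 0)
    (hI : ∀ i, IsAlgebraicMod κ I d (N.coord i)) (hd : 0 < d) (hδ : N.exceptional.totalDegree ≤ δ)
    (e f : ℕ) :
    |(frobeniusColength κ I (p ^ f) : ℝ) / (p : ℝ) ^ (f * n) -
        frobeniusColength κ I (p ^ (e + f)) / (p : ℝ) ^ ((e + f) * n)| ≤
      (1 + s) * (s * (δ * d ^ n)) / (p : ℝ) ^ f := by
  have hp : (0 : ℝ) < p := Nat.cast_pos.2 (expChar_pos κ p)
  have h_lower : (p : ℝ) ^ (e * n) * frobeniusColength κ I (p ^ f) ≤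
      frobeniusColength κ I (p ^ (e + f)) + p ^ (e * n) * N.exceptionalColength I (p ^ f) :=
    mod_cast N.pow_mul_frobeniusColength_le p hN hI e f
  have h_upper : (frobeniusColength κ I (p ^ (e + f)) : ℝ) ≤
      p ^ (e * n) * frobeniusColength κ I (p ^ f) +
        s * p ^ (e * n) * N.exceptionalColength I (p ^ f) :=
    mod_cast N.frobeniusColength_add_le p hN hI e f
  have h_error : (p : ℝ) ^ f * N.exceptionalColength I (p ^ f) ≤
      s * (δ * d ^ n) * p ^ (f * n) :=
    mod_cast N.pow_mul_exceptionalColength_le p hN hI hd hδ f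
  set ℓ : ℝ := (frobeniusColength κ I (p ^ f) : ℝ)
  set ℓ' : ℝ := (frobeniusColength κ I (p ^ (e + f)) : ℝ)
  set K : ℝ := (N.exceptionalColength I (p ^ f) : ℝ)
  have : 0 ≤ K := Nat.cast_nonneg _
  have h_abs : |p ^ (e * n) * ℓ - ℓ'| ≤ (1 + s) * (p ^ (e * n) * K) := by
    have h_nonneg : 0 ≤ (p : ℝ) ^ (e * n) * K := by positivity
    have h_nonneg' : 0 ≤ (s : ℝ) * (p ^ (e * n) * K) := by positivity
    rw [abs_le]
    constructor <;> linarith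
  calc |ℓ / (p : ℝ) ^ (f * n) - ℓ' / (p : ℝ) ^ ((e + f) * n)|
      = |p ^ (e * n) * ℓ - ℓ'| / (p ^ (e * n) * p ^ (f * n)) := by
        rw [add_mul, pow_add, ← abs_of_pos (a := (p : ℝ) ^ (e * n) * _) (by positivity), ← abs_div,
          abs_of_pos (a := (p : ℝ) ^ (e * n) * _) (by positivity)]
        congr 1
        field_simp
    _ ≤ (1 + s) * (p ^ (e * n) * K) / (p ^ (e * n) * p ^ (f * n)) := by gcongr
    _ = (1 + s) * (p ^ f * K) / (p ^ f * p ^ (f * n)) := by field_simp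
    _ ≤ (1 + s) * (s * (δ * d ^ n) * p ^ (f * n)) / (p ^ f * p ^ (f * n)) := by gcongr
    _ = (1 + s) * (s * (δ * d ^ n)) / p ^ f := by field_simp

/-- A bound for the rate of convergence of the normalized colengths which depends only on numerical
invariants that are constant in a family: the number `n` of coordinates, the number `s` of
generators, the degrees `d` of the coordinates modulo `I` and `δ` of the exceptional polynomial. -/
def convergenceConstant (n s d δ : ℕ) : ℕ := s * d ^ n + (1 + s) * (s * (δ * d ^ n))

theorem abs_normalized_frobeniusColength_sub_limit_le (hp : 1 < p)
    (hI : ∀ i, IsAlgebraicMod κ I d (N.coord i)) (hd : 0 < d) (hδ : N.exceptional.totalDegree ≤ δ)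
    {j : ℕ} (hj : aeval N.coord N.exceptional ∉ I ^ j) {dim m : ℕ} (hm : m ≠ 0) {L : ℝ}
    (hL : Tendsto (fun k : ℕ => (frobeniusColength κ I (p ^ k) : ℝ) / (p : ℝ) ^ (k * dim))
      atTop (𝓝 L)) :
    |(frobeniusColength κ I (p ^ m) : ℝ) / (p : ℝ) ^ (m * dim) - L| ≤
      convergenceConstant n s d δ / p := by
  have hp' : (1 : ℝ) < p := mod_cast hp
  have hN : N.exceptional ≠ 0 := fun h => hj (by rw [h, map_zero]; exact zero_mem _)
  have h_weaken : ∀ {C : ℝ}, C ≤ convergenceConstant n s d δ →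
      C / (p : ℝ) ^ m ≤ convergenceConstant n s d δ / p := fun hC => by
    gcongr
    exact le_self_pow₀ hp'.le hm
  rcases lt_trichotomy n dim with h_lt | rfl | h_gt
  · refine (abs_div_pow_sub_le_of_lt (C := s * d ^ n) hp' (fun k => Nat.cast_nonneg _)
      (fun k => ?_) h_lt hL m).trans (h_weaken ?_)
    · have h_le := (N.finite_and_frobeniusColength_le hI (p ^ k)).2
      rw [mul_pow, ← pow_mul, ← mul_assoc] at h_le
      exact_mod_cast h_le
    · exact_mod_cast Nat.le_add_right _ _
  · refine (abs_sub_le_of_tendsto_of_forall_add (fun e =>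
      N.abs_normalized_frobeniusColength_sub_le p hN hI hd hδ e m) hL).trans (h_weaken ?_)
    exact_mod_cast Nat.le_add_left _ _
  · refine absurd hL (not_tendsto_div_pow_of_lt hp' h_gt (f := j) fun e => ?_)
    exact_mod_cast N.pow_le_frobeniusColength p hI (fun h_mem => hj
      (Ideal.pow_le_pow_right (Nat.lt_pow_self hp).le (frobeniusPower_le_pow _ _ h_mem))) e

end NormalizationData

/-! ### Base change -/

section BaseChange

variable {A S : Type*} [CommRing A] [CommRing S] [Algebra A S] (κ : Type*) [CommRing κ]
  [Algebra A κ]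

lemma aeval_one_tmul {n : ℕ} (x : Fin n → S) (a : MvPolynomial (Fin n) A) :
    aeval (fun i => (1 : κ) ⊗ₜ[A] x i) (map (algebraMap A κ) a) = (1 : κ) ⊗ₜ[A] aeval x a := by
  rw [aeval_map_algebraMap]
  exact (comp_aeval_apply x (Algebra.TensorProduct.includeRight : S →ₐ[A] κ ⊗[A] S) a).symm

lemma aeval_one_tmul_smul_map_mul_one_tmul {n : ℕ} (x : Fin n → S) (t : κ)
    (a : MvPolynomial (Fin n) A) (y : S) :
    aeval (fun i => (1 : κ) ⊗ₜ[A] x i) (t • map (algebraMap A κ) a) * (1 : κ) ⊗ₜ[A] y =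
      t ⊗ₜ[A] (aeval x a * y) := by
  rw [map_smul, aeval_one_tmul, smul_mul_assoc, Algebra.TensorProduct.tmul_mul_tmul, one_mul,
    TensorProduct.smul_tmul', smul_eq_mul, mul_one]

namespace NormalizationData

variable {n s r : ℕ} (N : NormalizationData A S n s r)

/-- The base change to `κ` of the coordinate map `scaledRepr`. -/
noncomputable def scaledReprBaseChange : κ ⊗[A] S →ₗ[κ] (Fin r → MvPolynomial (Fin n) κ) :=
  LinearMap.liftBaseChange κ
    ((LinearMap.compLeft (mapAlgHom (Algebra.ofId A κ)).toLinearMap (Fin r)).comp N.scaledRepr)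

lemma scaledReprBaseChange_tmul (t : κ) (y : S) (i : Fin r) :
    N.scaledReprBaseChange κ (t ⊗ₜ y) i = t • map (algebraMap A κ) (N.scaledRepr y i) := by
  rw [scaledReprBaseChange, LinearMap.liftBaseChange_tmul]
  rfl

lemma scaledReprBaseChange_mul (a : MvPolynomial (Fin n) κ) (y : κ ⊗[A] S) :
    N.scaledReprBaseChange κ (aeval (fun i => (1 : κ) ⊗ₜ[A] N.coord i) a * y) =
      a • N.scaledReprBaseChange κ y := by
  induction a using MvPolynomial.induction_on' with
  | add a b ha hb => rw [map_add, add_mul, map_add, ha, hb, add_smul]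
  | monomial d t =>
    have h_monomial : monomial d t = t • map (algebraMap A κ) (monomial d (1 : A)) := by
      rw [map_monomial, map_one, smul_monomial, smul_eq_mul, mul_one]
    rw [h_monomial, map_smul, aeval_one_tmul, smul_mul_assoc, map_smul, smul_assoc]
    congr 1
    induction y with
    | zero => rw [mul_zero, map_zero, smul_zero]
    | add y z hy hz => rw [mul_add, map_add, hy, hz, map_add, smul_add]
    | tmul u y =>
      ext1 i
      rw [Algebra.TensorProduct.tmul_mul_tmul, one_mul, scaledReprBaseChange_tmul,
        N.scaledRepr_mul, Pi.smul_apply, Pi.smul_apply, scaledReprBaseChange_tmul, smul_eq_mul,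
        map_mul, smul_eq_mul, mul_smul_comm]

lemma exists_eq_sum_one_tmul_gen (y : κ ⊗[A] S) :
    ∃ a : Fin s → MvPolynomial (Fin n) κ,
      y = ∑ j, aeval (fun i => (1 : κ) ⊗ₜ[A] N.coord i) (a j) * (1 : κ) ⊗ₜ[A] N.gen j := by
  induction y with
  | zero => exact ⟨0, by simp⟩
  | tmul t y =>
    obtain ⟨a, ha⟩ := N.exists_eq_sum_gen y
    exact ⟨fun j => t • map (algebraMap A κ) (a j), by
      simp only [aeval_one_tmul_smul_map_mul_one_tmul, ← tmul_sum, ← ha]⟩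
  | add y z hy hz =>
    obtain ⟨a, rfl⟩ := hy
    obtain ⟨b, rfl⟩ := hz
    exact ⟨a + b, by simp only [Pi.add_apply, map_add, add_mul, Finset.sum_add_distrib]⟩

lemma one_tmul_denom_mul (y : κ ⊗[A] S) :
    aeval (fun i => (1 : κ) ⊗ₜ[A] N.coord i) (map (algebraMap A κ) N.denom) * y =
      ∑ i, aeval (fun i => (1 : κ) ⊗ₜ[A] N.coord i) (N.scaledReprBaseChange κ y i) *
        (1 : κ) ⊗ₜ[A] N.basis i := by
  induction y with
  | zero => simp
  | tmul t y =>
    simp only [scaledReprBaseChange_tmul, aeval_one_tmul_smul_map_mul_one_tmul, ← tmul_sum,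
      ← N.denom_mul]
    rw [aeval_one_tmul, Algebra.TensorProduct.tmul_mul_tmul, one_mul]
  | add y z hy hz => simp only [mul_add, hy, hz, map_add, Pi.add_apply, add_mul,
      Finset.sum_add_distrib]

/-- Normalization data for `κ ⊗ S`, all components being extended along `A → κ`. -/
noncomputable def baseChange : NormalizationData κ (κ ⊗[A] S) n s r where
  coord i := 1 ⊗ₜ N.coord i
  gen j := 1 ⊗ₜ N.gen j
  exists_eq_sum_gen := N.exists_eq_sum_one_tmul_gen κ
  basis i := 1 ⊗ₜ N.basis i
  denom := map (algebraMap A κ) N.denom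
  scaledRepr := N.scaledReprBaseChange κ
  scaledRepr_mul := N.scaledReprBaseChange_mul κ
  scaledRepr_basis i := by
    ext1 j
    rw [scaledReprBaseChange_tmul, one_smul, N.scaledRepr_basis]
    exact Pi.apply_single (fun _ => MvPolynomial.map (algebraMap A κ)) (fun _ => map_zero _) i
      N.denom j
  denom_mul := N.one_tmul_denom_mul κ

lemma baseChange_discr : (N.baseChange κ).discr = map (algebraMap A κ) N.discr := by
  rw [discr, discr, RingHom.map_det]
  congr 1
  ext1 i j
  simp only [RingHom.mapMatrix_apply, Matrix.map_apply, traceMatrix, trace, mulMatrix,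
    Matrix.of_apply, Matrix.trace, Matrix.diag_apply, map_sum]
  refine Finset.sum_congr rfl fun l _ => ?_
  simp only [baseChange, Algebra.TensorProduct.tmul_mul_tmul, one_mul, scaledReprBaseChange_tmul,
    one_smul]

lemma baseChange_exceptional :
    (N.baseChange κ).exceptional = map (algebraMap A κ) N.exceptional := by
  simp only [exceptional, multiplier, baseChange_discr, map_mul, map_pow]
  rfl

end NormalizationData

end BaseChange

section GenericIsomorphism

variable {A M M' : Type*} [CommRing A] [AddCommGroup M] [AddCommGroup M'] [Module A M]
  [Module A M']

lemma isLocalizedModule_powers_mkLinearMap_comp {φ : M' →ₗ[A] M} (hφ : Function.Injective φ)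
    {a : A} (ha : ∀ y, ∃ (k : ℕ) (x : M'), φ x = a ^ k • y) :
    IsLocalizedModule (.powers a) ((LocalizedModule.mkLinearMap (.powers a) M).comp φ) where
  map_units := IsLocalizedModule.map_units (LocalizedModule.mkLinearMap (.powers a) M)
  surj z := by
    obtain ⟨⟨y, b⟩, hy⟩ := IsLocalizedModule.surj (.powers a)
      (LocalizedModule.mkLinearMap (.powers a) M) z
    obtain ⟨k, x, hx⟩ := ha y
    refine ⟨⟨x, ⟨a ^ k, k, rfl⟩ * b⟩, ?_⟩
    rw [mul_smul, hy, LinearMap.comp_apply, hx, map_smul]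
    rfl
  exists_of_eq {x y} hxy := by
    obtain ⟨c, hc⟩ := IsLocalizedModule.exists_of_eq (S := .powers a)
      (f := LocalizedModule.mkLinearMap (.powers a) M) hxy
    exact ⟨c, hφ (by rw [LinearMap.map_smul_of_tower, LinearMap.map_smul_of_tower, hc])⟩

lemma isUnit_algebraMap_end_tensorProduct {a : A} {κ : Type*} [CommRing κ] [Algebra A κ]
    (haκ : IsUnit (algebraMap A κ a)) (x : Submonoid.powers a) :
    IsUnit (algebraMap A (Module.End A (κ ⊗[A] M)) x) := by
  obtain ⟨_, k, rfl⟩ := x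
  have h_eq : algebraMap A (Module.End A (κ ⊗[A] M)) a =
      Algebra.lsmul A A (κ ⊗[A] M) (algebraMap A κ a) :=
    LinearMap.ext fun y => (algebraMap_smul κ a y).symm
  change IsUnit (algebraMap A _ (a ^ k))
  rw [map_pow, h_eq]
  exact (haκ.map _).pow k

lemma bijective_baseChange_of_forall_exists_pow_smul {φ : M' →ₗ[A] M} (hφ : Function.Injective φ)
    {a : A} (ha : ∀ y, ∃ (k : ℕ) (x : M'), φ x = a ^ k • y) {κ : Type*} [CommRing κ] [Algebra A κ]
    (haκ : IsUnit (algebraMap A κ a)) : Function.Bijective (φ.baseChange κ) := by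
  have := isLocalizedModule_powers_mkLinearMap_comp hφ ha
  constructor
  · let inverse : M →ₗ[A] κ ⊗[A] M' :=
      (IsLocalizedModule.lift (.powers a) ((LocalizedModule.mkLinearMap (.powers a) M).comp φ)
        (TensorProduct.mk A κ M' 1) (isUnit_algebraMap_end_tensorProduct haκ)).comp
          (LocalizedModule.mkLinearMap (.powers a) M)
    have h_left : (LinearMap.liftBaseChange κ inverse).comp (φ.baseChange κ) = LinearMap.id := by
      ext x
      simp only [LinearMap.comp_apply, AlgebraTensorModule.curry_apply, curry_apply,
        LinearMap.coe_restrictScalars, LinearMap.baseChange_tmul,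
        LinearMap.liftBaseChange_tmul, one_smul, LinearMap.id_coe, id_eq]
      exact IsLocalizedModule.lift_apply (.powers a)
        ((LocalizedModule.mkLinearMap (.powers a) M).comp φ) _
        (isUnit_algebraMap_end_tensorProduct haκ) x
    exact Function.LeftInverse.injective (DFunLike.congr_fun h_left)
  · intro z
    induction z with
    | zero => exact ⟨0, map_zero _⟩
    | add y z hy hz =>
      obtain ⟨y, rfl⟩ := hy
      obtain ⟨z, rfl⟩ := hz
      exact ⟨y + z, map_add _ _ _⟩
    | tmul t y =>
      obtain ⟨k, x, hx⟩ := ha y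
      obtain ⟨b, hb⟩ := (haκ.pow k).exists_right_inv
      refine ⟨(t * b) ⊗ₜ x, ?_⟩
      rw [LinearMap.baseChange_tmul, hx, ← TensorProduct.smul_tmul, Algebra.smul_def, map_pow,
        mul_left_comm, hb, mul_one]

end GenericIsomorphism

/-! ### Existence of normalization data -/

section FractionBasis

section ScaledRepr

variable {P S F L : Type*} [CommRing P] [CommRing S] [Field F] [Algebra P F] [Field L] [Algebra S L]
  [Algebra F L] {r : ℕ}

/-- The coordinates of the elements of `S` in the `F`-basis `b` of `L` become elements of `P` after
multiplication by `c`, and are then given by `ρ`. -/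
def IsScaledRepr (b : Module.Basis (Fin r) F L) (c : P) (ρ : S → Fin r → P) : Prop :=
  ∀ y i, algebraMap P F (ρ y i) = algebraMap P F c * b.repr (algebraMap S L y) i

variable {b : Module.Basis (Fin r) F L} {e : Fin r → S} {c : P} {ρ : S → Fin r → P}

lemma IsScaledRepr.apply_eq_single [FaithfulSMul P F] (hρ : IsScaledRepr b c ρ)
    (hb : ∀ i, b i = algebraMap S L (e i)) (i : Fin r) : ρ (e i) = Pi.single i c := by
  ext1 j
  apply FaithfulSMul.algebraMap_injective P F
  rw [hρ, ← hb, b.repr_self, Finsupp.single_apply, mul_ite, mul_one, mul_zero, Pi.single_apply]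
  split_ifs <;> simp_all

lemma IsScaledRepr.algebraMap_trace (hρ : IsScaledRepr b c ρ)
    (hb : ∀ i, b i = algebraMap S L (e i)) (y : S) :
    algebraMap P F (Matrix.of fun k l => ρ (y * e l) k).trace =
      algebraMap P F c * Algebra.trace F L (algebraMap S L y) := by
  rw [Algebra.trace_eq_matrix_trace b, Matrix.trace, Matrix.trace, map_sum, Finset.mul_sum]
  refine Finset.sum_congr rfl fun l _ => ?_
  rw [Matrix.diag_apply, Matrix.diag_apply, Matrix.of_apply, hρ, Algebra.leftMulMatrix_eq_repr_mul,
    map_mul, hb]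

lemma IsScaledRepr.det_trace_ne_zero [FaithfulSMul P F] [CharZero F] (hρ : IsScaledRepr b c ρ)
    (hb : ∀ i, b i = algebraMap S L (e i)) (hc : c ≠ 0) :
    (Matrix.of fun i j => (Matrix.of fun k l => ρ (e i * e j * e l) k).trace).det ≠ 0 := by
  have h_trace : (algebraMap P F).mapMatrix
      (Matrix.of fun i j => (Matrix.of fun k l => ρ (e i * e j * e l) k).trace) =
        algebraMap P F c • Algebra.traceMatrix F b := by
    ext1 i j
    rw [RingHom.mapMatrix_apply, Matrix.map_apply, Matrix.of_apply, hρ.algebraMap_trace hb,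
      Matrix.smul_apply, Algebra.traceMatrix_apply, Algebra.traceForm_apply, hb, hb, map_mul,
      smul_eq_mul]
  have : FiniteDimensional F L := .of_basis b
  intro h_det
  have h_map := congrArg (algebraMap P F) h_det
  rw [map_zero, RingHom.map_det, h_trace, Matrix.det_smul] at h_map
  refine mul_ne_zero (pow_ne_zero _ ?_) (Algebra.discr_not_zero_of_basis F b) h_map
  rwa [Ne, map_eq_zero_iff _ (FaithfulSMul.algebraMap_injective P F)]

variable [Algebra P S] [Algebra P L] [IsScalarTower P S L] [IsScalarTower P F L]

lemma IsScaledRepr.smul_eq_sum [FaithfulSMul S L] (hρ : IsScaledRepr b c ρ)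
    (hb : ∀ i, b i = algebraMap S L (e i)) (y : S) : c • y = ∑ i, ρ y i • e i := by
  apply FaithfulSMul.algebraMap_injective S L
  calc algebraMap S L (c • y) = algebraMap P F c • algebraMap S L y := by
        rw [algebraMap_smul, ← algebraMap.coe_smul]
    _ = ∑ i, algebraMap P F (ρ y i) • b i := by
        simp_rw [hρ y, mul_smul, ← Finset.smul_sum, b.sum_repr]
    _ = algebraMap S L (∑ i, ρ y i • e i) := by
        simp_rw [map_sum, hb, algebraMap_smul, ← algebraMap.coe_smul]

lemma exists_isScaledRepr [IsDomain P] [IsFractionRing P F] [IsNoetherianRing P] [Module.Finite P S]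
    (b : Module.Basis (Fin r) F L) :
    ∃ (c : P) (ρ : S →ₗ[P] (Fin r → P)), c ≠ 0 ∧ IsScaledRepr b c ρ := by
  have := Module.finitePresentation_of_finite P S
  obtain ⟨ρ, c, hρ⟩ := Module.FinitePresentation.exists_lift_of_isLocalizedModule P⁰
    (.pi fun i => Algebra.linearMap P F ∘ₗ .proj i : (Fin r → P) →ₗ[P] (Fin r → F))
    ((b.equivFun.toLinearMap.restrictScalars P).comp (IsScalarTower.toAlgHom P S L).toLinearMap)
  refine ⟨c, ρ, nonZeroDivisors.coe_ne_zero c, fun y i => ?_⟩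
  rw [← Algebra.smul_def]
  exact congrFun (LinearMap.congr_fun hρ y) i

end ScaledRepr

attribute [local instance] FractionRing.liftAlgebra

lemma exists_basis_fractionRing_eq_algebraMap (P S : Type*) [CommRing P] [IsDomain P] [CommRing S]
    [IsDomain S] [Algebra P S] [Module.IsTorsionFree P S] [Module.Finite P S] :
    ∃ (r : ℕ) (e : Fin r → S) (b : Module.Basis (Fin r) (FractionRing P) (FractionRing S)),
      ∀ i, b i = algebraMap S (FractionRing S) (e i) := by
  have h_span : ⊤ ≤ Submodule.span (FractionRing P) (algebraMap S (FractionRing S) '' Set.univ) :=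
    (span_eq_top_localization_localization (FractionRing P) P⁰ (FractionRing S)
      Submodule.span_univ).ge
  let b := Module.Basis.ofSpan h_span
  have := Module.Finite.finite_basis b
  let index := Finite.equivFin ↑((linearIndepOn_empty (FractionRing P) id).extend
    (Set.empty_subset (algebraMap S (FractionRing S) '' Set.univ)))
  choose e _ he using fun i => Module.Basis.ofSpan_subset h_span ⟨index.symm i, rfl⟩
  exact ⟨_, e, b.reindex index, fun i => by rw [Module.Basis.reindex_apply, he]⟩

lemma exists_normalizationData (A S : Type*) [CommRing A] [IsDomain A] [CharZero A]
    [IsNoetherianRing A] [CommRing S] [IsDomain S] [Algebra A S] (n : ℕ)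
    [Algebra (MvPolynomial (Fin n) A) S] [IsScalarTower A (MvPolynomial (Fin n) A) S]
    [Module.Finite (MvPolynomial (Fin n) A) S] [Module.IsTorsionFree (MvPolynomial (Fin n) A) S] :
    ∃ (s r : ℕ) (N : NormalizationData A S n s r), N.exceptional ≠ 0 ∧ 0 < r := by
  let P := MvPolynomial (Fin n) A
  have := charZero_of_injective_algebraMap (IsFractionRing.injective P (FractionRing P))
  have h_aeval (a : P) : aeval (fun i => algebraMap P S (X i)) a = algebraMap P S a :=
    (aeval_algebraMap_apply S X a).trans (by rw [aeval_X_left_apply])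
  obtain ⟨r, e, b, hb⟩ := exists_basis_fractionRing_eq_algebraMap P S
  obtain ⟨c, ρ, hc, hρ⟩ := exists_isScaledRepr (P := P) (S := S) b
  obtain ⟨s, u, hu⟩ := Module.Finite.exists_fin (R := P) (M := S)
  let N : NormalizationData A S n s r :=
    { coord i := algebraMap P S (X i)
      gen := u
      exists_eq_sum_gen y := by
        obtain ⟨a, ha⟩ := (Submodule.mem_span_range_iff_exists_fun P).1 (hu ▸ Submodule.mem_top)
        exact ⟨a, by simp_rw [h_aeval, ← Algebra.smul_def]; exact ha.symm⟩
      basis := e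
      denom := c
      scaledRepr := ρ.restrictScalars A
      scaledRepr_mul a y := by
        rw [h_aeval, ← Algebra.smul_def]
        exact map_smul ρ a y
      scaledRepr_basis := hρ.apply_eq_single hb
      denom_mul y := by
        simp_rw [h_aeval, ← Algebra.smul_def]
        exact hρ.smul_eq_sum hb y }
  have h_discr : N.discr ≠ 0 := hρ.det_trace_ne_zero hb hc
  exact ⟨s, r, N, mul_ne_zero hc (mul_ne_zero (pow_ne_zero _ hc) h_discr),
    Fin.pos_iff_nonempty.2 b.index_nonempty⟩

end FractionBasis

/-! ### Normalization over a dense open subset of the base -/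

section GenericNormalization

/-- The automorphism of a polynomial ring multiplying each variable by a unit. -/
noncomputable def rescaleEquiv {K σ : Type*} [CommRing K] (b : σ → Kˣ) :
    MvPolynomial σ K ≃ₐ[K] MvPolynomial σ K :=
  .ofAlgHom (aeval fun i => C (b i : K) * X i) (aeval fun i => C (↑(b i)⁻¹ : K) * X i)
    (by ext1 i; simp [← mul_assoc, ← C_mul]) (by ext1 i; simp [← mul_assoc, ← C_mul])

lemma aeval_rescaleEquiv {K L σ : Type*} [CommRing K] [CommRing L] [Algebra K L] (b : σ → Kˣ)
    (z : σ → L) : (aeval z).comp (rescaleEquiv b : MvPolynomial σ K →ₐ[K] MvPolynomial σ K) =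
      aeval fun i => (b i : K) • z i := by
  ext1 i
  simp [rescaleEquiv, Algebra.smul_def]

section Localization

variable {A K S L σ : Type*} [CommRing A] [CommRing K] [CommRing S] [CommRing L] [Algebra A K]
  [Algebra A S] [Algebra A L] [Algebra K L] [Algebra S L] [IsScalarTower A K L]
  [IsScalarTower A S L] (M : Submonoid A)

lemma exists_units_smul_eq_algebraMap [IsLocalization M K]
    [IsLocalization (Algebra.algebraMapSubmonoid S M) L] (z : L) :
    ∃ (b : Kˣ) (x : S), (b : K) • z = algebraMap S L x := by
  obtain ⟨⟨x, ⟨_, c, hc, rfl⟩⟩, hx⟩ := IsLocalization.surj (Algebra.algebraMapSubmonoid S M) z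
  refine ⟨(IsLocalization.map_units K ⟨c, hc⟩).unit, x, ?_⟩
  rw [← hx, IsUnit.unit_spec, algebraMap_smul, Algebra.smul_def, mul_comm,
    IsScalarTower.algebraMap_apply A S L]

lemma algebraMap_aeval (x : σ → S) (q : MvPolynomial σ A) : algebraMap S L (aeval x q) =
    aeval (fun i => algebraMap S L (x i)) (MvPolynomial.map (algebraMap A K) q) := by
  rw [aeval_map_algebraMap]
  exact comp_aeval_apply x (IsScalarTower.toAlgHom A S L) q

attribute [local instance] algebraMvPolynomial

lemma exists_isIntegralElem_aeval_smul [FaithfulSMul S L] [IsLocalization M K] (x : σ → S) {y : S}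
    (hy : (aeval (R := K) fun i => algebraMap S L (x i)).toRingHom.IsIntegralElem
      (algebraMap S L y)) :
    ∃ c ∈ M, (aeval (R := A) x).toRingHom.IsIntegralElem (c • y) := by
  let _ : Algebra (MvPolynomial σ A) S := (aeval x).toRingHom.toAlgebra
  let _ : Algebra (MvPolynomial σ K) L := (aeval fun i => algebraMap S L (x i)).toRingHom.toAlgebra
  let _ : Algebra (MvPolynomial σ A) L := (aeval fun i => algebraMap S L (x i)).toRingHom.toAlgebra
  have : IsScalarTower A (MvPolynomial σ A) L := .of_algebraMap_eq fun a => (aeval_C _ a).symm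
  have : IsScalarTower (MvPolynomial σ A) (MvPolynomial σ K) L :=
    .of_algebraMap_eq fun q => (aeval_map_algebraMap K _ q).symm
  have : IsScalarTower (MvPolynomial σ A) S L :=
    .of_algebraMap_eq fun q => (comp_aeval_apply x (IsScalarTower.toAlgHom A S L) q).symm
  obtain ⟨⟨_, c, hc, rfl⟩, hcy⟩ := IsIntegral.exists_multiple_integral_of_isLocalization
    (R := MvPolynomial σ A) (Rₘ := MvPolynomial σ K) (M.map C) (algebraMap S L y) hy
  refine ⟨c, hc, (isIntegral_algebraMap_iff (FaithfulSMul.algebraMap_injective S L)).1 ?_⟩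
  convert! hcy using 1
  rw [Submonoid.smul_def, ← algebraMap_eq, algebraMap_smul]
  exact map_smul (IsScalarTower.toAlgHom A S L) c y

end Localization

attribute [local instance] Algebra.TensorProduct.rightAlgebra

lemma exists_injective_aeval_forall_isIntegralElem_smul (A S : Type*) [CommRing A] [IsDomain A]
    [CommRing S] [IsDomain S] [Algebra A S] [Module.IsTorsionFree A S] [Algebra.FiniteType A S] :
    ∃ (n : ℕ) (x : Fin n → S), Function.Injective (aeval (R := A) x) ∧
      ∀ y, ∃ c : A, c ≠ 0 ∧ (aeval (R := A) x).toRingHom.IsIntegralElem (c • y) := by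
  let K := FractionRing A
  let L := K ⊗[A] S
  have h_le : Algebra.algebraMapSubmonoid S A⁰ ≤ S⁰ :=
    map_le_nonZeroDivisors_of_injective _ (FaithfulSMul.algebraMap_injective A S) le_rfl
  have h_inj : Function.Injective (algebraMap S L) := IsLocalization.injective L h_le
  have : FaithfulSMul S L := (faithfulSMul_iff_algebraMap_injective S L).2 h_inj
  have : Nontrivial L := h_inj.nontrivial
  obtain ⟨n, g, hg_inj, hg_int⟩ := exists_integral_inj_algHom_of_fg K L
  choose b x hx using fun i => exists_units_smul_eq_algebraMap (K := K) (S := S) A⁰ (g (X i))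
  have h_aeval : aeval (fun i => algebraMap S L (x i)) = g.comp (rescaleEquiv b).toAlgHom := by
    rw [aeval_unique g, aeval_rescaleEquiv]
    exact congrArg aeval (funext fun i => (hx i).symm)
  refine ⟨n, x, fun q q' hq => ?_, fun y => ?_⟩
  · refine map_injective _ (IsFractionRing.injective A K)
      ((rescaleEquiv b).injective (hg_inj ?_))
    have := congrArg (algebraMap S L) hq
    rwa [algebraMap_aeval (K := K), algebraMap_aeval (K := K), h_aeval] at this
  · have hy : (aeval (R := K) fun i => algebraMap S L (x i)).toRingHom.IsIntegralElem
        (algebraMap S L y) := by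
      rw [h_aeval]
      exact RingHom.IsIntegral.trans _ _
        (RingHom.isIntegral_of_surjective _ (rescaleEquiv b).surjective) hg_int _
    obtain ⟨c, hc, hcy⟩ := exists_isIntegralElem_aeval_smul A⁰ x hy
    exact ⟨c, nonZeroDivisors.ne_zero hc, hcy⟩

end GenericNormalization

lemma exists_pow_smul_mem {A S : Type*} [CommRing A] [CommRing S] [Algebra A S] {T : Set S}
    (hT : Algebra.adjoin A T = ⊤) (S' : Subalgebra A S) (a : A) (h : ∀ t ∈ T, a • t ∈ S') (y : S) :
    ∃ k : ℕ, a ^ k • y ∈ S' := by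
  have hy : y ∈ Algebra.adjoin A T := hT ▸ Algebra.mem_top
  induction hy using Algebra.adjoin_induction with
  | mem t ht => exact ⟨1, (pow_one a).symm ▸ h t ht⟩
  | algebraMap b => exact ⟨0, by rw [pow_zero, one_smul]; exact S'.algebraMap_mem b⟩
  | add y z _ _ hy hz =>
    obtain ⟨k, hk⟩ := hy
    obtain ⟨l, hl⟩ := hz
    refine ⟨k + l, ?_⟩
    rw [smul_add]
    nth_rw 1 [add_comm k l]
    rw [pow_add, pow_add, mul_smul, mul_smul]
    exact add_mem (S'.smul_mem hk _) (S'.smul_mem hl _)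
  | mul y z _ _ hy hz =>
    obtain ⟨k, hk⟩ := hy
    obtain ⟨l, hl⟩ := hz
    refine ⟨k + l, ?_⟩
    rw [pow_add, ← smul_mul_smul_comm]
    exact mul_mem hk hl

lemma exists_normalizationData_adjoin {A S : Type*} [CommRing A] [IsDomain A] [CharZero A]
    [IsNoetherianRing A] [CommRing S] [IsDomain S] [Algebra A S] {n : ℕ} {x : Fin n → S}
    (hx : Function.Injective (aeval (R := A) x)) {W : Set S} (hW_fin : W.Finite)
    (hW : ∀ t ∈ W, (aeval (R := A) x).toRingHom.IsIntegralElem t) :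
    ∃ (S' : Subalgebra A S) (s r : ℕ) (N : NormalizationData A S' n s r),
      N.exceptional ≠ 0 ∧ 0 < r ∧ W ⊆ S' := by
  let P := MvPolynomial (Fin n) A
  let _ : Algebra P S := (aeval x).toRingHom.toAlgebra
  have : IsScalarTower A P S := .of_algebraMap_eq fun a => (aeval_C x a).symm
  have : FaithfulSMul P S := (faithfulSMul_iff_algebraMap_injective P S).2 hx
  have : Module.IsTorsionFree P S := inferInstance
  let S₁ : Subalgebra P S := Algebra.adjoin P W
  have : Module.Finite P S₁ := Algebra.finite_adjoin_of_finite_of_isIntegral hW_fin hW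
  obtain ⟨s, r, N, hN, hr⟩ := exists_normalizationData A S₁ n
  exact ⟨S₁.restrictScalars A, s, r, N, hN, hr, Algebra.subset_adjoin⟩

lemma exists_generic_normalizationData (A S : Type*) [CommRing A] [IsDomain A] [CharZero A]
    [IsNoetherianRing A] [CommRing S] [IsDomain S] [Algebra A S] [Module.IsTorsionFree A S]
    [Algebra.FiniteType A S] :
    ∃ (a : A) (S' : Subalgebra A S) (n s r : ℕ) (N : NormalizationData A S' n s r), a ≠ 0 ∧
      N.exceptional ≠ 0 ∧ 0 < r ∧ ∀ y : S, ∃ k : ℕ, a ^ k • y ∈ S' := by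
  classical
  obtain ⟨T, hT⟩ := (Algebra.FiniteType.out : (⊤ : Subalgebra A S).FG)
  obtain ⟨n, x, hx, h_int⟩ := exists_injective_aeval_forall_isIntegralElem_smul A S
  choose c hc h_int using h_int
  have h_prod (t) (ht : t ∈ T) :
      (aeval (R := A) x).toRingHom.IsIntegralElem ((∏ u ∈ T, c u) • t) := by
    rw [← Finset.prod_erase_mul _ _ ht, mul_smul, Algebra.smul_def]
    refine RingHom.IsIntegralElem.mul _ ?_ (h_int t)
    exact (aeval_C (R := A) x _) ▸ RingHom.isIntegralElem_map _
  obtain ⟨S', s, r, N, hN, hr, hS'⟩ := exists_normalizationData_adjoin hx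
    (T.finite_toSet.image fun t => (∏ u ∈ T, c u) • t) (Set.forall_mem_image.2 h_prod)
  exact ⟨∏ u ∈ T, c u, S', n, s, r, N, Finset.prod_ne_zero_iff.2 fun t _ => hc t, hN, hr,
    exists_pow_smul_mem hT S' _ fun t ht => hS' ⟨t, ht, rfl⟩⟩

/-! ### Properties of almost all fibers -/

section HoldsGenerically

/-- The fields over `A` whose image in `Spec A` lies in a suitable nonempty basic open subset all
have the property `P`. -/
def HoldsGenerically (A : Type u) [CommRing A]
    (P : ∀ (κ : Type w) [Field κ] [Algebra A κ], Prop) : Prop :=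
  ∃ g : A, g ≠ 0 ∧ ∀ (κ : Type w) [Field κ] [Algebra A κ], algebraMap A κ g ≠ 0 → P κ

variable {A : Type u} [CommRing A] {P Q : ∀ (κ : Type w) [Field κ] [Algebra A κ], Prop}

lemma HoldsGenerically.mono (hP : HoldsGenerically A P)
    (h : ∀ (κ : Type w) [Field κ] [Algebra A κ], P κ → Q κ) : HoldsGenerically A Q := by
  obtain ⟨g, hg, hgP⟩ := hP
  exact ⟨g, hg, fun κ _ _ hκ => h κ (hgP κ hκ)⟩

lemma holdsGenerically_algebraMap_ne_zero {a : A} (ha : a ≠ 0) :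
    HoldsGenerically.{u, w} A fun κ _ _ => algebraMap A κ a ≠ 0 :=
  ⟨a, ha, fun _ _ _ hκ => hκ⟩

lemma holdsGenerically_map_ne_zero {n : ℕ} {q : MvPolynomial (Fin n) A} (hq : q ≠ 0) :
    HoldsGenerically.{u, w} A fun κ _ _ => MvPolynomial.map (algebraMap A κ) q ≠ 0 := by
  obtain ⟨α, hα⟩ := ne_zero_iff.1 hq
  refine ⟨coeff α q, hα, fun κ _ _ hκ => ne_zero_iff.2 ⟨α, ?_⟩⟩
  rwa [coeff_map]

variable [IsDomain A]

lemma HoldsGenerically.and (hP : HoldsGenerically A P) (hQ : HoldsGenerically A Q) :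
    HoldsGenerically.{u, w} A fun κ _ _ => P κ ∧ Q κ := by
  obtain ⟨g, hg, hgP⟩ := hP
  obtain ⟨h, hh, hhQ⟩ := hQ
  refine ⟨g * h, mul_ne_zero hg hh, fun κ _ _ hκ => ?_⟩
  rw [map_mul, mul_ne_zero_iff] at hκ
  exact ⟨hgP κ hκ.1, hhQ κ hκ.2⟩

lemma holdsGenerically_forall {ι : Type*} [Finite ι]
    {P : ι → ∀ (κ : Type w) [Field κ] [Algebra A κ], Prop}
    (hP : ∀ i, HoldsGenerically A (P i)) : HoldsGenerically.{u, w} A fun κ _ _ => ∀ i, P i κ := by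
  have := Fintype.ofFinite ι
  choose g hg hgP using hP
  refine ⟨∏ i, g i, Finset.prod_ne_zero_iff.2 fun i _ => hg i, fun κ _ _ hκ i => hgP i κ ?_⟩
  rw [map_prod] at hκ
  exact Finset.prod_ne_zero_iff.1 hκ i (Finset.mem_univ i)

end HoldsGenerically

/-! ### Fiber ideals -/

section FiberIdeal

variable {A S S' : Type*} [CommRing A] [CommRing S] [Algebra A S] [CommRing S'] [Algebra A S']

/-- The extension of an ideal `I` of an `A`-algebra `S` to the base change `κ ⊗ S`, which for a
field `κ` over `A` is a geometric fiber of `S`. -/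
abbrev fiberIdeal (A κ : Type*) {S : Type*} [CommRing A] [CommRing κ] [Algebra A κ] [CommRing S]
    [Algebra A S] (I : Ideal S) : Ideal (κ ⊗[A] S) :=
  I.map (Algebra.TensorProduct.includeRight : S →ₐ[A] κ ⊗[A] S)

lemma one_tmul_mem_fiberIdeal_iff {κ : Type*} [CommRing κ] [Algebra A κ] {I : Ideal S} {y : S} :
    (1 : κ) ⊗ₜ[A] y ∈ fiberIdeal A κ I ↔ (1 : κ) ⊗ₜ[A] Ideal.Quotient.mk I y = 0 := by
  rw [← Ideal.Quotient.eq_zero_iff_mem,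
    ← (Algebra.TensorProduct.tensorQuotientEquiv (R := A) κ S κ I).map_eq_zero_iff]
  rfl

variable {κ : Type*} [Field κ] [Algebra A κ] {ψ : S' →ₐ[A] S} {a : A}

lemma map_fiberIdeal_comap (ha : ∀ y, ∃ (k : ℕ) (x : S'), ψ x = a ^ k • y)
    (haκ : algebraMap A κ a ≠ 0) (I : Ideal S) :
    (fiberIdeal A κ (I.comap ψ)).map (Algebra.TensorProduct.map (AlgHom.id κ κ) ψ) =
      fiberIdeal A κ I := by
  apply le_antisymm
  · rw [Ideal.map_le_iff_le_comap, Ideal.map_le_iff_le_comap]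
    exact fun x hx => Ideal.mem_map_of_mem
      (Algebra.TensorProduct.includeRight : S →ₐ[A] κ ⊗[A] S) hx
  · rw [Ideal.map_le_iff_le_comap]
    intro y hy
    obtain ⟨k, x, hx⟩ := ha y
    have hxI : x ∈ I.comap ψ := by
      rw [Ideal.mem_comap, hx]
      exact I.smul_of_tower_mem _ hy
    have h_mem := Ideal.mem_map_of_mem (Algebra.TensorProduct.map (AlgHom.id κ κ) ψ)
      (Ideal.mem_map_of_mem (Algebra.TensorProduct.includeRight : S' →ₐ[A] κ ⊗[A] S') hxI)
    have h_eq : (1 : κ) ⊗ₜ[A] y = ((algebraMap A κ a ^ k)⁻¹ : κ) •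
        Algebra.TensorProduct.map (AlgHom.id κ κ) ψ ((1 : κ) ⊗ₜ[A] x) := by
      rw [Algebra.TensorProduct.map_tmul, hx, map_one, ← TensorProduct.smul_tmul,
        TensorProduct.smul_tmul', ← algebraMap_smul κ (a ^ k), smul_smul, smul_eq_mul, mul_one,
        map_pow, inv_mul_cancel₀ (pow_ne_zero k haκ)]
    rw [Ideal.mem_comap]
    change (1 : κ) ⊗ₜ[A] y ∈ _
    rw [h_eq]
    exact Submodule.smul_of_tower_mem _ _ h_mem

lemma frobeniusColength_map_of_bijective {R R' : Type*} [CommRing R] [CommRing R'] [Algebra κ R]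
    [Algebra κ R'] {f : R →ₐ[κ] R'} (hf : Function.Bijective f) (J : Ideal R) (q : ℕ) :
    frobeniusColength κ (J.map f) q = frobeniusColength κ J q :=
  (Ideal.quotientEquivAlg _ _ (AlgEquiv.ofBijective f hf)
    (map_frobeniusPower_of_surjective (f := (f : R →+* R')) hf.2 J q).symm
    ).symm.toLinearEquiv.finrank_eq

lemma frobeniusColength_fiberIdeal_comap (hψ : Function.Injective ψ)
    (ha : ∀ y, ∃ (k : ℕ) (x : S'), ψ x = a ^ k • y) (haκ : algebraMap A κ a ≠ 0) (I : Ideal S)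
    (q : ℕ) : frobeniusColength κ (fiberIdeal A κ (I.comap ψ)) q =
      frobeniusColength κ (fiberIdeal A κ I) q := by
  rw [← map_fiberIdeal_comap ha haκ I]
  exact (frobeniusColength_map_of_bijective
    (bijective_baseChange_of_forall_exists_pow_smul (φ := ψ.toLinearMap) hψ ha haκ.isUnit) _ q).symm

lemma frobeniusColength_eq_zero_of_not_finite {I : Ideal S}
    (h : ¬ Module.Finite κ (κ ⊗[A] (S ⧸ I))) {q : ℕ} (hq : q ≠ 0) :
    frobeniusColength κ (fiberIdeal A κ I) q = 0 := by
  refine Module.finrank_of_not_finite fun h_fin => h ?_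
  have h_le := frobeniusPower_le_self (fiberIdeal A κ I) hq
  have : Module.Finite κ (κ ⊗[A] S ⧸ fiberIdeal A κ I) :=
    .of_surjective (Ideal.Quotient.factorₐ κ h_le).toLinearMap
      (Ideal.Quotient.factor_surjective h_le)
  exact .equiv (Algebra.TensorProduct.tensorQuotientEquiv (R := A) κ S κ I).symm.toLinearEquiv

end FiberIdeal

/-! ### Generic fibers of algebraic algebras -/

lemma exists_linearMap_apply_ne_zero {A M : Type*} [CommRing A] [IsDomain A] [IsNoetherianRing A]
    [AddCommGroup M] [Module A M] [Module.Finite A M] {β : M} (hβ : ∀ b : A, b ≠ 0 → b • β ≠ 0) :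
    ∃ χ : M →ₗ[A] A, χ β ≠ 0 := by
  let K := FractionRing A
  let ι := LocalizedModule.mkLinearMap A⁰ M
  have hιβ : ι β ≠ 0 := by
    rw [Ne, IsLocalizedModule.eq_zero_iff A⁰ ι]
    rintro ⟨b, hb⟩
    exact hβ b (nonZeroDivisors.coe_ne_zero b) hb
  obtain ⟨f, hf⟩ := Module.Projective.exists_dual_ne_zero K hιβ
  have : Module.FinitePresentation A M := Module.finitePresentation_of_finite A M
  obtain ⟨χ, s, hχ⟩ := Module.FinitePresentation.exists_lift_of_isLocalizedModule A⁰
    (Algebra.linearMap A K) ((f.restrictScalars A).comp ι)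
  refine ⟨χ, fun h => ?_⟩
  have h_eq : Algebra.linearMap A K (χ β) = s • f (ι β) := LinearMap.congr_fun hχ β
  rw [h, map_zero, Submonoid.smul_def, eq_comm, smul_eq_zero] at h_eq
  exact h_eq.elim (nonZeroDivisors.coe_ne_zero s) hf

lemma holdsGenerically_one_tmul_ne_zero_of_finite {A : Type u} {M : Type v} [CommRing A]
    [IsDomain A] [IsNoetherianRing A] [AddCommGroup M] [Module A M] [Module.Finite A M] {β : M}
    (hβ : ∀ b : A, b ≠ 0 → b • β ≠ 0) :
    HoldsGenerically.{u, w} A fun κ _ _ => (1 : κ) ⊗ₜ[A] β ≠ 0 := by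
  obtain ⟨χ, hχ⟩ := exists_linearMap_apply_ne_zero hβ
  refine (holdsGenerically_algebraMap_ne_zero hχ).mono fun κ _ _ hκ h => hκ ?_
  simpa using congrArg (LinearMap.liftBaseChange κ ((Algebra.linearMap A κ).comp χ)) h

lemma exists_finite_subalgebra (A Q : Type*) [CommRing A] [IsDomain A] [CommRing Q] [Algebra A Q]
    [Algebra.FiniteType A Q] [Algebra.IsAlgebraic A Q] :
    ∃ (a : A) (Q' : Subalgebra A Q), a ≠ 0 ∧ Module.Finite A Q' ∧
      ∀ y : Q, ∃ k : ℕ, a ^ k • y ∈ Q' := by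
  obtain ⟨T, hT⟩ := (Algebra.FiniteType.out : (⊤ : Subalgebra A Q).FG)
  obtain ⟨a, ha, h_int⟩ := Algebra.IsAlgebraic.exists_integral_multiples A T
  exact ⟨a, Algebra.adjoin A ((a • ·) '' (T : Set Q)), ha,
    Algebra.finite_adjoin_of_finite_of_isIntegral (T.finite_toSet.image _)
      (Set.forall_mem_image.2 h_int),
    exists_pow_smul_mem hT _ a fun t ht => Algebra.subset_adjoin ⟨t, ht, rfl⟩⟩

lemma holdsGenerically_one_tmul_ne_zero {A : Type u} {Q : Type v} [CommRing A] [IsDomain A]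
    [IsNoetherianRing A] [CommRing Q] [Algebra A Q] [Algebra.FiniteType A Q]
    [Algebra.IsAlgebraic A Q] {β : Q} (hβ : ∀ b : A, b ≠ 0 → b • β ≠ 0) :
    HoldsGenerically.{u, w} A fun κ _ _ => (1 : κ) ⊗ₜ[A] β ≠ 0 := by
  obtain ⟨a, Q', ha, _, hQ'⟩ := exists_finite_subalgebra A Q
  obtain ⟨k, hk⟩ := hQ' β
  have h_torsion (b : A) (hb : b ≠ 0) : b • (⟨a ^ k • β, hk⟩ : Q') ≠ 0 := fun h =>
    hβ (b * a ^ k) (mul_ne_zero hb (pow_ne_zero k ha))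
      ((mul_smul b _ β).trans (congrArg Subtype.val h))
  refine ((holdsGenerically_algebraMap_ne_zero ha).and
    (holdsGenerically_one_tmul_ne_zero_of_finite h_torsion)).mono fun κ _ _ ⟨haκ, hκ⟩ h => hκ ?_
  have h_bij := bijective_baseChange_of_forall_exists_pow_smul (φ := Q'.val.toLinearMap)
    Subtype.val_injective (fun y => (hQ' y).imp fun _ hk => ⟨⟨_, hk⟩, rfl⟩) haκ.isUnit
  apply h_bij.1
  rw [map_zero, LinearMap.baseChange_tmul]
  change (1 : κ) ⊗ₜ[A] (a ^ k • β) = 0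
  rw [tmul_smul, h, smul_zero]

-- Krull's intersection theorem in the generic fiber.
lemma exists_pow_forall_smul_notMem {A S : Type*} [CommRing A] [IsDomain A] [CommRing S]
    [IsDomain S] [IsNoetherianRing S] [Algebra A S] [Module.IsTorsionFree A S] {I : Ideal S}
    (hI : I.comap (algebraMap A S) = ⊥) {y : S} (hy : y ≠ 0) :
    ∃ j : ℕ, ∀ b : A, b ≠ 0 → b • y ∉ I ^ j := by
  let M := Algebra.algebraMapSubmonoid S A⁰
  let L := Localization M
  have hM : M ≤ S⁰ := map_le_nonZeroDivisors_of_injective _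
    (FaithfulSMul.algebraMap_injective A S) le_rfl
  have : IsDomain L := IsLocalization.isDomain_of_le_nonZeroDivisors L hM
  have : IsNoetherianRing L := IsLocalization.isNoetherianRing M L inferInstance
  have h_ne_top : I.map (algebraMap S L) ≠ ⊤ := by
    rw [IsLocalization.map_algebraMap_ne_top_iff_disjoint M L, Set.disjoint_left]
    rintro _ ⟨a, ha, rfl⟩ haI
    exact nonZeroDivisors.ne_zero ha (hI.le haI)
  have h_notMem : algebraMap S L y ∉ ⨅ j, I.map (algebraMap S L) ^ j := by
    rwa [Ideal.iInf_pow_eq_bot_of_isDomain _ h_ne_top, Ideal.mem_bot,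
      map_eq_zero_iff _ (IsLocalization.injective L hM)]
  obtain ⟨j, hj⟩ := not_forall.1 (mt Ideal.mem_iInf.2 h_notMem)
  rw [← Ideal.map_pow, IsLocalization.algebraMap_mem_map_algebraMap_iff M] at hj
  refine ⟨j, fun b hb h => hj ⟨algebraMap A S b, ⟨b, mem_nonZeroDivisors_of_ne_zero hb, rfl⟩, ?_⟩⟩
  rwa [← Algebra.smul_def]

lemma isAlgebraic_quotient_pow {A S : Type*} [CommRing A] [IsDomain A] [CommRing S] [Algebra A S]
    (I : Ideal S) [h_alg : Algebra.IsAlgebraic A (S ⧸ I)] (j : ℕ) :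
    Algebra.IsAlgebraic A (S ⧸ I ^ j) := by
  refine ⟨fun z => ?_⟩
  obtain ⟨y, rfl⟩ := Ideal.Quotient.mkₐ_surjective A (I ^ j) z
  obtain ⟨h, h0, hy⟩ := h_alg.isAlgebraic (Ideal.Quotient.mkₐ A I y)
  refine ⟨h ^ j, pow_ne_zero _ h0, ?_⟩
  rw [Polynomial.aeval_algHom_apply] at hy ⊢
  rw [map_pow]
  exact Ideal.Quotient.eq_zero_iff_mem.2 (Ideal.pow_mem_pow (Ideal.Quotient.eq_zero_iff_mem.1 hy) j)

lemma exists_holdsGenerically_one_tmul_notMem_pow {A : Type u} {S : Type v} [CommRing A]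
    [IsDomain A] [IsNoetherianRing A] [CommRing S] [IsDomain S] [Algebra A S]
    [Algebra.FiniteType A S] [Module.IsTorsionFree A S] {I : Ideal S}
    (hI : I.comap (algebraMap A S) = ⊥) [Algebra.IsAlgebraic A (S ⧸ I)] {y : S} (hy : y ≠ 0) :
    ∃ j : ℕ, HoldsGenerically.{u, w} A fun κ _ _ => (1 : κ) ⊗ₜ[A] y ∉ fiberIdeal A κ I ^ j := by
  have : IsNoetherianRing S := Algebra.FiniteType.isNoetherianRing A S
  obtain ⟨j, hj⟩ := exists_pow_forall_smul_notMem hI hy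
  have := isAlgebraic_quotient_pow (A := A) I j
  have h_torsion (b : A) (hb : b ≠ 0) : b • Ideal.Quotient.mk (I ^ j) y ≠ 0 := fun h =>
    hj b hb (Ideal.Quotient.eq_zero_iff_mem.1 h)
  refine ⟨j, (holdsGenerically_one_tmul_ne_zero h_torsion).mono fun κ _ _ hκ h => hκ ?_⟩
  rwa [← Ideal.map_pow, one_tmul_mem_fiberIdeal_iff] at h

/-! ### Generic fibers of algebras which are not algebraic -/

lemma exists_isPrime_transcendental_mk {A Q : Type*} [CommRing A] [IsDomain A] [CommRing Q]
    [Algebra A Q] {y : Q} (hy : Transcendental A y) :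
    ∃ J : Ideal Q, J.IsPrime ∧ Transcendental A (Ideal.Quotient.mkₐ A J y) := by
  obtain ⟨J, hJ, -, h_disj⟩ := Ideal.exists_le_prime_disjoint ⊥
    ((Polynomial A)⁰.map (Polynomial.aeval y : Polynomial A →ₐ[A] Q)) (by
      rw [Set.disjoint_right]
      rintro _ ⟨h, h0, rfl⟩ hy0
      exact hy ⟨h, nonZeroDivisors.ne_zero h0, hy0⟩)
  refine ⟨J, hJ, fun ⟨h, h0, hJy⟩ => ?_⟩
  rw [Polynomial.aeval_algHom_apply] at hJy
  exact Set.disjoint_left.1 h_disj (Ideal.Quotient.eq_zero_iff_mem.1 hJy)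
    ⟨h, mem_nonZeroDivisors_of_ne_zero h0, rfl⟩

namespace NormalizationData

variable {A S : Type*} [CommRing A] [CommRing S] [Algebra A S] {n s r : ℕ}
  (N : NormalizationData A S n s r)

lemma aeval_coord_injective [IsDomain A] (hN : N.denom ≠ 0) (hr : 0 < r) :
    Function.Injective (aeval N.coord : MvPolynomial (Fin n) A →ₐ[A] S) := by
  refine (injective_iff_map_eq_zero _).2 fun a ha => ?_
  have h_zero := N.eq_zero_of_sum_basis_eq_zero hN (a := fun _ => a)
    (by simp only [ha, zero_mul, Finset.sum_const_zero])
  exact congrFun h_zero ⟨0, hr⟩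

lemma finiteType (N : NormalizationData A S n s r) : Algebra.FiniteType A S := by
  classical
  refine ⟨⟨Finset.univ.image N.coord ∪ Finset.univ.image N.gen, top_le_iff.1 fun y _ => ?_⟩⟩
  obtain ⟨a, rfl⟩ := N.exists_eq_sum_gen y
  rw [Finset.coe_union, Finset.coe_image, Finset.coe_image, Finset.coe_univ, Finset.coe_univ,
    Set.image_univ, Set.image_univ]
  refine sum_mem fun j _ => mul_mem ?_ (Algebra.subset_adjoin (.inr ⟨j, rfl⟩))
  refine Algebra.adjoin_mono Set.subset_union_left ?_
  rw [Algebra.adjoin_range_eq_range_aeval]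
  exact ⟨a j, rfl⟩

lemma finite_of_isEmpty (N : NormalizationData A S 0 s r) : Module.Finite A S := by
  classical
  refine ⟨⟨Finset.univ.image N.gen, top_le_iff.1 fun y _ => ?_⟩⟩
  obtain ⟨a, rfl⟩ := N.exists_eq_sum_gen y
  refine Submodule.sum_mem _ fun j _ => ?_
  obtain ⟨b, hb⟩ := C_surjective (R := A) (Fin 0) (a j)
  rw [← hb, aeval_C, ← Algebra.smul_def]
  exact Submodule.smul_mem _ _ (Submodule.subset_span (by simp))

lemma pos_of_transcendental [IsDomain A] (N : NormalizationData A S n s r) {y : S}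
    (hy : Transcendental A y) : 0 < n := by
  refine n.pos_of_ne_zero fun hn => ?_
  subst hn
  have := N.finite_of_isEmpty
  exact hy (Algebra.IsIntegral.isIntegral (R := A) y).isAlgebraic

lemma not_finite {κ R : Type*} [Field κ] [CommRing R] [Algebra κ R]
    (N : NormalizationData κ R n s r) (hN : N.denom ≠ 0) (hr : 0 < r) (hn : 0 < n) :
    ¬ Module.Finite κ R := fun _ => by
  have : Module.Finite κ (MvPolynomial (Fin n) κ) :=
    .of_injective (aeval N.coord).toLinearMap (N.aeval_coord_injective hN hr)
  exact transcendental_X κ (⟨0, hn⟩ : Fin n)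
    (Algebra.IsIntegral.isIntegral (R := κ) _).isAlgebraic

end NormalizationData

section Transcendental

variable {A : Type u} {Q : Type v} [CommRing A] [IsDomain A] [CharZero A] [IsNoetherianRing A]
  [CommRing Q] [Algebra A Q] [Algebra.FiniteType A Q]

lemma holdsGenerically_not_finite_of_isDomain [IsDomain Q] {y : Q} (hy : Transcendental A y) :
    HoldsGenerically.{u, w} A fun κ _ _ => ¬ Module.Finite κ (κ ⊗[A] Q) := by
  have : FaithfulSMul A Q := (faithfulSMul_iff_algebraMap_injective A Q).2
    ((injective_iff_map_eq_zero _).2 fun a ha => by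
      by_contra ha0
      exact hy ⟨Polynomial.C a, by simpa using ha0, by rw [Polynomial.aeval_C, ha]⟩)
  obtain ⟨a, Q', n, s, r, N, ha, hN, hr, hQ'⟩ := exists_generic_normalizationData A Q
  have hn : 0 < n := by
    obtain ⟨k, hk⟩ := hQ' y
    refine N.pos_of_transcendental (y := ⟨a ^ k • y, hk⟩) fun h_alg => hy ?_
    exact IsAlgebraic.of_smul (mem_nonZeroDivisors_of_ne_zero (pow_ne_zero k ha))
      (h_alg.algHom Q'.val)
  refine ((holdsGenerically_algebraMap_ne_zero ha).and
    (holdsGenerically_map_ne_zero (N.denom_ne_zero hN))).mono fun κ _ _ ⟨haκ, hκ⟩ h_fin => ?_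
  have h_bij := bijective_baseChange_of_forall_exists_pow_smul (φ := Q'.val.toLinearMap)
    Subtype.val_injective (fun y => (hQ' y).imp fun _ hk => ⟨⟨_, hk⟩, rfl⟩) haκ.isUnit
  exact (N.baseChange κ).not_finite hκ hr hn (.of_injective _ h_bij.1)

lemma holdsGenerically_not_finite (h : ¬ Algebra.IsAlgebraic A Q) :
    HoldsGenerically.{u, w} A fun κ _ _ => ¬ Module.Finite κ (κ ⊗[A] Q) := by
  obtain ⟨y, hy⟩ := not_forall.1 (mt Algebra.IsAlgebraic.mk h)
  obtain ⟨J, _, hJ⟩ := exists_isPrime_transcendental_mk hy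
  refine (holdsGenerically_not_finite_of_isDomain hJ).mono fun κ _ _ hκ h_fin => hκ ?_
  exact .of_surjective ((Ideal.Quotient.mkₐ A J).toLinearMap.baseChange κ)
    (LinearMap.lTensor_surjective κ (Ideal.Quotient.mkₐ_surjective A J))

end Transcendental

/-! ### The uniform estimate -/

/-- Whenever the normalized colengths `ℓ(R/J^{[pᵏ]})/p^{k·dim}` converge, the terms with `k > 0`
are within `C/p` of the limit. The exponent `dim` is not tied to the dimension of `R`. -/
def NormalizedColengthErrorLE (κ : Type*) {R : Type*} [Field κ] [CommRing R] [Algebra κ R]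
    (J : Ideal R) (C : ℕ) : Prop :=
  ∀ (p : ℕ) [ExpChar κ p] [PerfectRing κ p], 1 < p → ∀ (dim m : ℕ) (L : ℝ), m ≠ 0 →
    Tendsto (fun k : ℕ => (frobeniusColength κ J (p ^ k) : ℝ) / (p : ℝ) ^ (k * dim)) atTop (𝓝 L) →
    |(frobeniusColength κ J (p ^ m) : ℝ) / (p : ℝ) ^ (m * dim) - L| ≤ C / p

section UniformEstimate

lemma IsAlgebraicMod.mono {κ R : Type*} [CommRing κ] [CommRing R] [Algebra κ R] {I : Ideal R}
    {d d' : ℕ} {x : R} (h : IsAlgebraicMod κ I d x) (hd : d ≤ d') : IsAlgebraicMod κ I d' x :=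
  let ⟨f, hf, hfd, hfx⟩ := h
  ⟨f, hf, hfd.trans hd, hfx⟩

lemma exists_isAlgebraicMod {A S : Type*} [CommRing A] [CommRing S] [Algebra A S] (I : Ideal S)
    [h_alg : Algebra.IsAlgebraic A (S ⧸ I)] (x : S) : ∃ d, IsAlgebraicMod A I d x := by
  obtain ⟨h, h0, hx⟩ := h_alg.isAlgebraic (Ideal.Quotient.mkₐ A I x)
  rw [Polynomial.aeval_algHom_apply] at hx
  exact ⟨h.natDegree, h, h0, le_rfl, Ideal.Quotient.eq_zero_iff_mem.1 hx⟩

variable {A : Type u} {S : Type v} [CommRing A] [CommRing S] [Algebra A S]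

lemma IsAlgebraicMod.holdsGenerically_one_tmul {I : Ideal S} {d : ℕ} {x : S}
    (hx : IsAlgebraicMod A I d x) : HoldsGenerically.{u, w} A fun κ _ _ =>
      IsAlgebraicMod κ (fiberIdeal A κ I) d ((1 : κ) ⊗ₜ[A] x) := by
  obtain ⟨h, h0, hd, hx⟩ := hx
  refine (holdsGenerically_algebraMap_ne_zero (Polynomial.leadingCoeff_ne_zero.2 h0)).mono
    fun κ _ _ hκ => ⟨h.map (algebraMap A κ), fun h_map => hκ ?_,
      Polynomial.natDegree_map_le.trans hd, ?_⟩
  · rw [Polynomial.leadingCoeff, ← Polynomial.coeff_map, h_map, Polynomial.coeff_zero]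
  · rw [Polynomial.aeval_map_algebraMap]
    change Polynomial.aeval ((Algebra.TensorProduct.includeRight : S →ₐ[A] κ ⊗[A] S) x) h ∈ _
    rw [Polynomial.aeval_algHom_apply]
    exact Ideal.mem_map_of_mem _ hx

lemma NormalizationData.holdsGenerically_normalizedColengthErrorLE [IsDomain A]
    [IsNoetherianRing A] [IsDomain S] [Module.IsTorsionFree A S] {n s r : ℕ}
    (N : NormalizationData A S n s r) (hN : N.exceptional ≠ 0) (hr : 0 < r) {I : Ideal S}
    (hI : I.comap (algebraMap A S) = ⊥) [Algebra.IsAlgebraic A (S ⧸ I)] :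
    ∃ C : ℕ, HoldsGenerically.{u, w} A fun κ _ _ =>
      NormalizedColengthErrorLE κ (fiberIdeal A κ I) C := by
  have := N.finiteType
  choose d hd using fun i => exists_isAlgebraicMod (A := A) I (N.coord i)
  have h_alg (i) := ((hd i).mono
    ((Finset.le_sup (Finset.mem_univ i)).trans (Nat.le_succ _))).holdsGenerically_one_tmul
  have h_exc : aeval N.coord N.exceptional ≠ 0 := by
    rwa [Ne, map_eq_zero_iff _ (N.aeval_coord_injective (N.denom_ne_zero hN) hr)]
  obtain ⟨j, hj⟩ := exists_holdsGenerically_one_tmul_notMem_pow hI h_exc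
  refine ⟨convergenceConstant n s (Finset.univ.sup d + 1) N.exceptional.totalDegree,
    ((holdsGenerically_forall h_alg).and hj).mono
      fun κ _ _ ⟨h_algκ, hjκ⟩ p _ _ hp dim m L hm hL => ?_⟩
  have : Nontrivial (κ ⊗[A] S) :=
    nontrivial_of_ne _ 0 (ne_of_mem_of_not_mem (zero_mem (fiberIdeal A κ I ^ j)) hjκ).symm
  have : ExpChar (κ ⊗[A] S) p :=
    expChar_of_injective_algebraMap (algebraMap κ (κ ⊗[A] S)).injective p
  refine (N.baseChange κ).abs_normalized_frobeniusColength_sub_limit_le p hp h_algκ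
    (Nat.succ_pos _) ?_ (j := j) ?_ hm hL
  · rw [baseChange_exceptional]
    exact Finset.sup_mono (support_map_subset _ _)
  · rw [baseChange_exceptional]
    change aeval (fun i => (1 : κ) ⊗ₜ[A] N.coord i) _ ∉ _
    rwa [aeval_one_tmul]

variable [IsDomain A] [CharZero A] [IsNoetherianRing A] [Algebra.FiniteType A S] {I : Ideal S}

lemma holdsGenerically_normalizedColengthErrorLE_of_isAlgebraic [IsDomain S]
    [Module.IsTorsionFree A S] (hI : I.comap (algebraMap A S) = ⊥)
    [Algebra.IsAlgebraic A (S ⧸ I)] : ∃ C : ℕ, HoldsGenerically.{u, w} A fun κ _ _ =>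
      NormalizedColengthErrorLE κ (fiberIdeal A κ I) C := by
  obtain ⟨a, S', n, s, r, N, ha, hN, hr, hS'⟩ := exists_generic_normalizationData A S
  have : Algebra.IsAlgebraic A (S' ⧸ I.comap S'.val) :=
    .of_injective (Ideal.quotientMapₐ I S'.val le_rfl) Ideal.quotientMap_injective
  obtain ⟨C, hC⟩ := N.holdsGenerically_normalizedColengthErrorLE hN hr (I := I.comap S'.val)
    ((Ideal.comap_comap _ (S'.val : S' →+* S)).trans hI)
  refine ⟨C, ((holdsGenerically_algebraMap_ne_zero ha).and hC).mono fun κ _ _ ⟨haκ, hκ⟩ => ?_⟩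
  unfold NormalizedColengthErrorLE at hκ ⊢
  simpa only [frobeniusColength_fiberIdeal_comap (ψ := S'.val) Subtype.val_injective
    (fun y => (hS' y).imp fun _ hk => ⟨⟨_, hk⟩, rfl⟩) haκ] using hκ

lemma holdsGenerically_normalizedColengthErrorLE_of_not_isAlgebraic
    (hI : ¬ Algebra.IsAlgebraic A (S ⧸ I)) : HoldsGenerically.{u, w} A fun κ _ _ =>
      NormalizedColengthErrorLE κ (fiberIdeal A κ I) 0 := by
  refine (holdsGenerically_not_finite hI).mono fun κ _ _ hκ p _ _ hp dim m L _ hL => ?_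
  have h_zero : ∀ k, frobeniusColength κ (fiberIdeal A κ I) (p ^ k) = 0 := fun k =>
    frobeniusColength_eq_zero_of_not_finite hκ (pow_ne_zero k (by lia))
  simp only [h_zero, Nat.cast_zero, zero_div] at hL ⊢
  simp [tendsto_nhds_unique hL tendsto_const_nhds]

theorem exists_holdsGenerically_normalizedColengthErrorLE [IsDomain S] [Module.IsTorsionFree A S]
    (hI : I.comap (algebraMap A S) = ⊥) : ∃ C : ℕ, HoldsGenerically.{u, w} A fun κ _ _ =>
      NormalizedColengthErrorLE κ (fiberIdeal A κ I) C := by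
  by_cases h : Algebra.IsAlgebraic A (S ⧸ I)
  · exact holdsGenerically_normalizedColengthErrorLE_of_isAlgebraic hI
  · exact ⟨0, holdsGenerically_normalizedColengthErrorLE_of_not_isAlgebraic h⟩

end UniformEstimate

/-! ### Closed points of arithmetic schemes -/

lemma isJacobsonRing_int : IsJacobsonRing ℤ := by
  refine isJacobsonRing_iff_prime_eq.2 fun P hP => ?_
  rcases eq_or_ne P ⊥ with rfl | hP0
  · refine (Submodule.eq_bot_iff _).2 fun x hx => ?_
    rcases Int.isUnit_iff.1 (Ideal.mem_jacobson_bot.1 hx (3 * x)) with h | h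
    · exact pow_eq_zero_iff two_ne_zero |>.1 (by linarith)
    · nlinarith [sq_nonneg x]
  · have := hP.isMaximal hP0
    exact Ideal.jacobson_eq_self_of_isMaximal

section ClosedPoints

variable {A : Type*} [CommRing A] {𝔪 : Ideal A} [𝔪.IsMaximal]

lemma ringChar_quotient_prime [Algebra.FiniteType ℤ A] : (ringChar (A ⧸ 𝔪)).Prime := by
  let := Ideal.Quotient.field 𝔪
  refine (CharP.char_is_prime_or_zero (A ⧸ 𝔪) _).resolve_right fun h_zero => ?_
  have : CharZero (A ⧸ 𝔪) := (CharP.ringChar_zero_iff_CharZero (A ⧸ 𝔪)).1 h_zero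
  have : Algebra.FiniteType ℤ (A ⧸ 𝔪) := .of_surjective (Ideal.Quotient.mkₐ ℤ 𝔪)
    (Ideal.Quotient.mkₐ_surjective ℤ 𝔪)
  have := isJacobsonRing_int
  have := finite_of_finite_type_of_isJacobsonRing ℤ (A ⧸ 𝔪)
  exact Int.not_isField
    (isField_of_isIntegral_of_isField (algebraMap ℤ (A ⧸ 𝔪)).injective_int (Field.toIsField _))

lemma lt_ringChar_quotient_of_factorial_notMem [Algebra.FiniteType ℤ A] {B : ℕ}
    (hB : (B.factorial : A) ∉ 𝔪) : B < ringChar (A ⧸ 𝔪) := by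
  by_contra! h_le
  refine hB (Ideal.Quotient.eq_zero_iff_mem.1 ?_)
  rw [map_natCast, ringChar.spec]
  exact Nat.dvd_factorial ringChar_quotient_prime.pos h_le

end ClosedPoints

lemma comap_algebraMap_eq_bot_of_subset {A k R : Type*} [CommRing A] [Field k] [CommRing R]
    [Algebra A k] [Algebra k R] [Algebra A R] [IsScalarTower A k R]
    (hAk : Function.Injective (algebraMap A k)) {S : Subalgebra A R} {J : Ideal S} {I : Ideal R}
    (hJI : Subtype.val '' (J : Set S) ⊆ I) (hI : I ≠ ⊤) : J.comap (algebraMap A S) = ⊥ := by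
  refine (Submodule.eq_bot_iff _).2 fun a ha => by_contra fun ha0 => hI ?_
  refine I.eq_top_of_isUnit_mem (hJI ⟨_, ha, rfl⟩) ?_
  change IsUnit (algebraMap A R a)
  rw [IsScalarTower.algebraMap_apply A k R]
  exact (IsUnit.mk0 _ ((map_ne_zero_iff _ hAk).2 ha0)).map _

end HilbertKunz

open HilbertKunz in
theorem spread_fiber_colength_tendsto_eHK_general
    {k R : Type*} [Field k] [CharZero k] [CommRing R] [IsDomain R] [Algebra k R]
    (d : ℕ) (_hdim : ringKrullDim R = d)
    (I : Ideal R) (hIne : I ≠ ⊤) (_hIfin : FiniteDimensional k (R ⧸ I))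
    (A : Type*) [CommRing A] [IsDomain A] [Algebra A k]
    (hAk : Function.Injective (algebraMap A k)) (hAfg : Algebra.FiniteType ℤ A)
    [Algebra A R] [IsScalarTower A k R]
    (S : Subalgebra A R) (hSfg : Algebra.FiniteType A S)
    (_hSspan : Submodule.span k (S : Set R) = ⊤)
    (I_A : Ideal S)
    (hIA : Submodule.span k (Subtype.val '' (I_A : Set S)) = Submodule.restrictScalars k I)
    (m : ℕ) (hm : m ≠ 0) :
    ∀ ε : ℝ, 0 < ε → ∃ g : A, g ≠ 0 ∧
      ∀ (𝔪 : Ideal A) (h𝔪 : 𝔪.IsMaximal), g ∉ 𝔪 →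
        ∀ eHK : ℝ,
          Tendsto
            (fun n : ℕ =>
              (spreadFiberColength S I_A 𝔪 h𝔪 ((ringChar (A ⧸ 𝔪)) ^ n) : ℝ) /
                (ringChar (A ⧸ 𝔪) : ℝ) ^ (n * d))
            atTop (nhds eHK) →
          |(spreadFiberColength S I_A 𝔪 h𝔪 ((ringChar (A ⧸ 𝔪)) ^ m) : ℝ) /
                (ringChar (A ⧸ 𝔪) : ℝ) ^ (m * d) -
              eHK| < ε := by
  intro ε hε
  have : CharZero A := (algebraMap A k).charZero
  have : IsNoetherianRing A := Algebra.FiniteType.isNoetherianRing ℤ A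
  have : FaithfulSMul A k := (faithfulSMul_iff_algebraMap_injective A k).2 hAk
  have : FaithfulSMul A R := .trans A k R
  have : Module.IsTorsionFree A R := .trans_faithfulSMul A R R
  have hI : I_A.comap (algebraMap A S) = ⊥ :=
    comap_algebraMap_eq_bot_of_subset hAk
      (Submodule.subset_span.trans (congrArg SetLike.coe hIA).subset) hIne
  obtain ⟨C, g, hg, hC⟩ := exists_holdsGenerically_normalizedColengthErrorLE hI
  obtain ⟨B, hB⟩ := exists_nat_gt (C / ε)
  refine ⟨g * B.factorial, mul_ne_zero hg (mod_cast B.factorial_ne_zero),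
    fun 𝔪 h𝔪 hg𝔪 eHK h_lim => ?_⟩
  let := Ideal.Quotient.field 𝔪
  have hp := ringChar_quotient_prime (𝔪 := 𝔪)
  have hBp : B < ringChar (A ⧸ 𝔪) :=
    lt_ringChar_quotient_of_factorial_notMem fun h => hg𝔪 (𝔪.mul_mem_left g h)
  have hgκ : algebraMap A (AlgebraicClosure (A ⧸ 𝔪)) g ≠ 0 := fun h => by
    rw [IsScalarTower.algebraMap_apply A (A ⧸ 𝔪), map_eq_zero] at h
    exact hg𝔪 (𝔪.mul_mem_right _ (Ideal.Quotient.eq_zero_iff_mem.1 h))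
  have := charP_of_injective_algebraMap
    (algebraMap (A ⧸ 𝔪) (AlgebraicClosure (A ⧸ 𝔪))).injective (ringChar (A ⧸ 𝔪))
  have := ExpChar.prime (R := AlgebraicClosure (A ⧸ 𝔪)) hp
  refine (hC _ hgκ _ hp.one_lt d m eHK hm h_lim).trans_lt ?_
  rw [div_lt_comm₀ (mod_cast hp.pos) hε]
  exact hB.trans (mod_cast hBp)

theorem spread_fiber_colength_tendsto_eHK
    {k R : Type*} [Field k] [IsAlgClosed k] [CharZero k]
    [CommRing R] [IsDomain R] [IsNoetherianRing R] [Algebra k R]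
    (𝒜 : ℕ → Submodule k R) [GradedAlgebra 𝒜]
    -- `R` is standard graded: `R₀ = k` and `R` is generated over `k` in degree 1
    (h0 : 𝒜 0 = Submodule.span k {1})
    (hgen : Algebra.adjoin k (𝒜 1 : Set R) = ⊤)
    (d : ℕ) (hd : 2 ≤ d) (hdim : ringKrullDim R = d)
    (I : Ideal R) (hIhom : I.IsHomogeneous 𝒜) (hIne : I ≠ ⊤)
    (hIfin : FiniteDimensional k (R ⧸ I))
    -- the spread `(A, R_A, I_A)`: `A ⊆ k` a finitely generated `ℤ`-algebra,
    -- `R_A = S` a finitely generated graded `A`-subalgebra of `R` with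
    -- `R = R_A ⊗_A k`, and `I_A ⊆ R_A` a homogeneous ideal with `I = I_A ⊗_A k`
    (A : Type*) [CommRing A] [IsDomain A] [Algebra A k]
    (hAk : Function.Injective (algebraMap A k)) (hAfg : Algebra.FiniteType ℤ A)
    [Algebra A R] [IsScalarTower A k R]
    (S : Subalgebra A R) (hSfg : Algebra.FiniteType A S)
    (hSspan : Submodule.span k (S : Set R) = ⊤)
    (hSgraded : ∀ m : ℕ, 𝒜 m = Submodule.span k ((S : Set R) ∩ (𝒜 m : Set R)))
    (I_A : Ideal S)
    (hIA : Submodule.span k (Subtype.val '' (I_A : Set S)) =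
      Submodule.restrictScalars k I)
    (hIAhom : Ideal.span {x : S | x ∈ I_A ∧ ∃ m, (x : R) ∈ 𝒜 m} = I_A)
    (m : ℕ) (hm : d - 1 ≤ m) :
    ∀ ε : ℝ, 0 < ε → ∃ g : A, g ≠ 0 ∧
      ∀ (𝔪 : Ideal A) (h𝔪 : 𝔪.IsMaximal), g ∉ 𝔪 →
        -- `eHK` is the Hilbert–Kunz multiplicity `e_HK(R_s, I_s)` of the fiber
        ∀ eHK : ℝ,
          Tendsto
            (fun n : ℕ =>
              (spreadFiberColength S I_A 𝔪 h𝔪 ((ringChar (A ⧸ 𝔪)) ^ n) : ℝ) /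
                (ringChar (A ⧸ 𝔪) : ℝ) ^ (n * d))
            atTop (nhds eHK) →
          |(spreadFiberColength S I_A 𝔪 h𝔪 ((ringChar (A ⧸ 𝔪)) ^ m) : ℝ) /
                (ringChar (A ⧸ 𝔪) : ℝ) ^ (m * d) -
              eHK| < ε :=
  spread_fiber_colength_tendsto_eHK_general d hdim I hIne hIfin A hAk hAfg S hSfg hSspan I_A hIA m
    (by lia)
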